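/- arXiv:1802.02549 — 4 statements merged into one kernel-verified Lean document; each statement's English description precedes it below -/
import Mathlib

section
/- The relation of smooth homotopy on continuous dg algebra morphisms between dg Arens-Michael algebras is an equivalence relation (in particular, it is transitive). -/
open DirectSum

/-- A (cohomologically graded) differential graded algebra over a commutative ring `k`:
a `ℤ`-graded `k`-algebra equipped with a square-zero degree `+1` differential
satisfying the graded Leibniz rule. -/
structure DGA (k : Type) [CommRing k] : Type 1 where
  A : Type
  [ringA : Ring A]
  [algA : Algebra k A]
  gr : ℤ → Submodule k A
  [gradedA : GradedRing gr]
  d : A →ₗ[k] A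
  d_sq : ∀ a, d (d a) = 0
  d_mem : ∀ (i : ℤ), ∀ a ∈ gr i, d a ∈ gr (i + 1)
  leibniz : ∀ (i : ℤ), ∀ a ∈ gr i, ∀ b, d (a * b) = d a * b + (((-1 : ℤˣ) ^ i : ℤˣ) : ℤ) • (a * d b)

attribute [instance] DGA.ringA DGA.algA DGA.gradedA

namespace DGA

variable {k : Type} [CommRing k]

/-- A Maurer-Cartan element of a dg algebra: a degree `1` element `x` with `d x + x² = 0`. -/
def IsMC (A : DGA k) (x : A.A) : Prop := x ∈ A.gr 1 ∧ A.d x + x * x = 0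

/-- The set of Maurer-Cartan elements of `A`. -/
def MCEl (A : DGA k) : Type := {x : A.A // A.IsMC x}

/-- The gauge action of an invertible element `g` on `x`:  `g·x = g x g⁻¹ - (d g) g⁻¹`. -/
def GaugeAct (A : DGA k) (g : (A.A)ˣ) (x : A.A) : A.A :=
  (g : A.A) * x * ((g⁻¹ : (A.A)ˣ) : A.A) - A.d (g : A.A) * ((g⁻¹ : (A.A)ˣ) : A.A)

/-- Gauge equivalence of elements of a dg algebra: `y = g·x` for some invertible
degree-zero `g`. -/
def GaugeEquiv (A : DGA k) (x y : A.A) : Prop :=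
  ∃ g : (A.A)ˣ, (g : A.A) ∈ A.gr 0 ∧ y = A.GaugeAct g x

/-- The Maurer-Cartan moduli set: Maurer-Cartan elements modulo gauge equivalence. -/
def MCmod (A : DGA k) : Type := Quot (fun x y : A.MCEl => A.GaugeEquiv x.1 y.1)

/-- `a` is cohomologous to `1` in the twisted algebra `A^x` (with differential `d + [x,-]`);
here `a` has degree `0` so the twisted differential of the degree `-1` element `s`
is `d s + x s + s x`. -/
def CohomologousToOne (A : DGA k) (x a : A.A) : Prop :=
  ∃ s ∈ A.gr (-1 : ℤ), a - 1 = A.d s + (x * s + s * x)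

/-- Homotopy gauge equivalence of Maurer-Cartan elements: the one-sided twisted modules
`A^{[x]}` and `A^{[y]}` are homotopy equivalent as right dg `A`-modules, explicitly:
there are degree-zero `g`, `h` intertwining the twisted differentials whose composites
are cohomologous to `1` in `A^x`, resp. `A^y`. -/
def HomotopyGaugeEquiv (A : DGA k) (x y : A.A) : Prop :=
  ∃ g ∈ A.gr 0, ∃ h ∈ A.gr 0,
    A.d g + y * g - g * x = 0 ∧
    A.d h + x * h - h * y = 0 ∧
    A.CohomologousToOne x (h * g) ∧
    A.CohomologousToOne y (g * h)

/-- The Maurer-Cartan homotopy moduli set: MC elements modulo homotopy gauge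
equivalence. -/
def MChmod (A : DGA k) : Type := Quot (fun x y : A.MCEl => A.HomotopyGaugeEquiv x.1 y.1)

open scoped Classical in
/-- The parity (Koszul sign) operator of a graded algebra: `a ↦ Σᵢ (-1)ⁱ aᵢ`. -/
noncomputable def parity (A : DGA k) (a : A.A) : A.A :=
  (DirectSum.decompose A.gr a).sum (fun i x => (((-1 : ℤˣ) ^ i : ℤˣ) : ℤ) • (x : A.A))

end DGA

/-- A morphism of dg algebras: an algebra map preserving the grading and the differential. -/
structure DGAHom {k : Type} [CommRing k] (A B : DGA k) where
  toFun : A.A →ₐ[k] B.A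
  map_gr : ∀ (i : ℤ), ∀ a ∈ A.gr i, toFun a ∈ B.gr i
  map_d : ∀ a, toFun (A.d a) = B.d (toFun a)

namespace DGAHom
variable {k : Type} [CommRing k]

def comp {A B C : DGA k} (g : DGAHom B C) (f : DGAHom A B) : DGAHom A C where
  toFun := g.toFun.comp f.toFun
  map_gr := fun i a ha => g.map_gr i _ (f.map_gr i a ha)
  map_d := fun a => by simp [f.map_d, g.map_d]

def id' (A : DGA k) : DGAHom A A :=
  ⟨AlgHom.id k A.A, fun _ _ h => h, fun _ => rfl⟩

end DGAHom


open Filter Topology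

/-- Derivative of a curve in a topological vector space, within a set:
the limit of difference quotients. -/
def HasTVSDerivWithinAt {M : Type} [AddCommGroup M] [Module ℝ M] [TopologicalSpace M]
    (c : ℝ → M) (c' : M) (s : Set ℝ) (t : ℝ) : Prop :=
  Filter.Tendsto (fun u : ℝ => (u - t)⁻¹ • (c u - c t)) (nhdsWithin t (s \ {t})) (nhds c')

/-- A curve in a topological vector space is smooth on a set if it admits an infinite
tower of continuous derivatives on that set. -/
def TVSSmoothOn {M : Type} [AddCommGroup M] [Module ℝ M] [TopologicalSpace M]
    (c : ℝ → M) (s : Set ℝ) : Prop :=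
  ∃ D : ℕ → ℝ → M, D 0 = c ∧ (∀ n, ∀ t ∈ s, HasTVSDerivWithinAt (D n) (D (n + 1) t) s t) ∧
    ∀ n, ContinuousOn (D n) s

/-- Local m-convexity: `0` has a basis of convex balanced multiplicatively closed
neighbourhoods. Together with completeness and Hausdorffness this characterizes
Arens-Michael algebras. -/
def LocallyMConvex (A : Type) [Ring A] [Module ℝ A] [TopologicalSpace A] : Prop :=
  ∀ s ∈ nhds (0 : A), ∃ U ∈ nhds (0 : A),
    U ⊆ s ∧ Convex ℝ U ∧ Balanced ℝ U ∧ ∀ a ∈ U, ∀ b ∈ U, a * b ∈ U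

/-- Unfolding of a smooth homotopy `F : A → B ⊗ Ω[0,1]` between two maps of dg
Arens-Michael algebras, identifying `B ⊗ Ω[0,1]` with smooth `B`-valued forms
`F₀(a)(t) + F₁(a)(t) dt` on `[0,1]`:  `F` is `ℝ`-linear, unital, multiplicative
(with the Koszul sign rule on the `dt`-component), grading- and differential-
compatible, smooth in `t`, continuous in `a`, and restricts to `f₀`, `f₁` at the
endpoints. -/
def IsSmoothAlgHomotopy (A B : DGA ℝ) [TopologicalSpace A.A] [TopologicalSpace B.A] (f₀ f₁ : A.A → B.A)
    (F₀ F₁ : A.A → ℝ → B.A) : Prop :=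
  (∀ a b t, F₀ (a + b) t = F₀ a t + F₀ b t) ∧
  (∀ a b t, F₁ (a + b) t = F₁ a t + F₁ b t) ∧
  (∀ (c : ℝ) a t, F₀ (c • a) t = c • F₀ a t) ∧
  (∀ (c : ℝ) a t, F₁ (c • a) t = c • F₁ a t) ∧
  (∀ t, F₀ 1 t = 1) ∧ (∀ t, F₁ 1 t = 0) ∧
  (∀ a b t, F₀ (a * b) t = F₀ a t * F₀ b t) ∧
  (∀ (i : ℤ), ∀ a ∈ A.gr i, ∀ b t,
    F₁ (a * b) t = (((-1 : ℤˣ) ^ i : ℤˣ) : ℤ) • (F₀ a t * F₁ b t) + F₁ a t * F₀ b t) ∧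
  (∀ (i : ℤ), ∀ a ∈ A.gr i, ∀ t, F₀ a t ∈ B.gr i ∧ F₁ a t ∈ B.gr (i - 1)) ∧
  (∀ a t, F₀ (A.d a) t = B.d (F₀ a t)) ∧
  (∀ a, ∀ t ∈ Set.Icc (0 : ℝ) 1,
    HasTVSDerivWithinAt (F₀ a) (F₁ (A.d a) t + B.d (F₁ a t)) (Set.Icc (0 : ℝ) 1) t) ∧
  (∀ a, TVSSmoothOn (F₀ a) (Set.Icc (0 : ℝ) 1) ∧ TVSSmoothOn (F₁ a) (Set.Icc (0 : ℝ) 1)) ∧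
  (∀ t, Continuous (fun a => F₀ a t) ∧ Continuous fun a => F₁ a t) ∧
  (∀ a, F₀ a 0 = f₀ a ∧ F₀ a 1 = f₁ a)

/-- Two morphisms of dg Arens-Michael algebras are smoothly homotopic if there is a
smooth homotopy `A → B ⊗ Ω[0,1]` between them. -/
def SmoothlyHomotopicHoms (A B : DGA ℝ) [TopologicalSpace A.A] [TopologicalSpace B.A] (f₀ f₁ : DGAHom A B) : Prop :=
  ∃ F₀ F₁ : A.A → ℝ → B.A, IsSmoothAlgHomotopy A B f₀.toFun f₁.toFun F₀ F₁

/-- A smooth homotopy equivalence between two dg Arens-Michael algebras: continuous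
dg algebra maps `f : A → B` and `g : B → A` whose composites are smoothly homotopic
to the identities. -/
def SmoothHomotopyEquivalenceData (A B : DGA ℝ) [TopologicalSpace A.A] [TopologicalSpace B.A]
    (f : DGAHom A B) (g : DGAHom B A) : Prop :=
  Continuous f.toFun ∧ Continuous g.toFun ∧
    SmoothlyHomotopicHoms B B (f.comp g) (DGAHom.id' B) ∧
    SmoothlyHomotopicHoms A A (g.comp f) (DGAHom.id' A)

/-- Two dg Arens-Michael algebras are smoothly homotopy equivalent if there are continuous
dg algebra maps in both directions whose composites are smoothly homotopic to the
identities. -/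
def SmoothlyHomotopyEquivalent (A B : DGA ℝ) [TopologicalSpace A.A] [TopologicalSpace B.A] :
    Prop :=
  ∃ (f : DGAHom A B) (g : DGAHom B A), SmoothHomotopyEquivalenceData A B f g

/-!
A homotopy is a family, indexed by `t`, of dg algebra maps `F₀(t)` with degree `-1` derivations
`F₁(t)` along them, subject to `∂ₜF₀ = F₁ d + d F₁`. Pulling back along a smooth `φ : ℝ → ℝ`
turns it into `F₀(φ t) + φ'(t) F₁(φ t) dt`; taking `φ t = 1 - t` gives symmetry.

For transitivity, pull a homotopy `F` from `f` to `g` back along a transition function that is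
constant for `t ≥ 1/2`, and a homotopy `G` from `g` to `h` along one that is constant for
`t ≤ 1/2`. Then `F + G - g` is smooth because it is a sum, and it is a homotopy because for each
`t` it coincides with `F` or with `G`.
-/

open scoped ContDiff

section TVSCalculus

variable {M : Type} [AddCommGroup M] [Module ℝ M] [TopologicalSpace M]
  {c e : ℝ → M} {c' e' : M} {s s' : Set ℝ} {t : ℝ} {φ θ : ℝ → ℝ} {φ' θ' : ℝ}

theorem hasTVSDerivWithinAt_iff_continuousWithinAt_update_slope :
    HasTVSDerivWithinAt c c' s t ↔
      ContinuousWithinAt (Function.update (slope c t) t c') s t :=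
  continuousWithinAt_update_same.symm

theorem hasTVSDerivWithinAt_const (m : M) (s : Set ℝ) (t : ℝ) :
    HasTVSDerivWithinAt (fun _ => m) 0 s t := by
  simpa [HasTVSDerivWithinAt] using tendsto_const_nhds

namespace HasTVSDerivWithinAt

theorem add [ContinuousAdd M] (hc : HasTVSDerivWithinAt c c' s t)
    (he : HasTVSDerivWithinAt e e' s t) : HasTVSDerivWithinAt (c + e) (c' + e') s t := by
  refine (Tendsto.add hc he).congr fun u => ?_
  rw [Pi.add_apply, Pi.add_apply, add_sub_add_comm, smul_add]

variable [ContinuousSMul ℝ M]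

theorem comp (hc : HasTVSDerivWithinAt c c' s' (φ t)) (hφ : HasDerivWithinAt φ φ' s t)
    (hmaps : Set.MapsTo φ s s') : HasTVSDerivWithinAt (c ∘ φ) (φ' • c') s t := by
  -- The slope of `c` is extended by its limit `c'`, since `φ u = φ t` may hold for `u ≠ t`.
  set q := Function.update (slope c (φ t)) (φ t) c' with hq
  have hq_cont : ContinuousWithinAt (q ∘ φ) s t :=
    (hasTVSDerivWithinAt_iff_continuousWithinAt_update_slope.1 hc).comp
      hφ.continuousWithinAt hmaps
  have hq_lim : Tendsto (q ∘ φ) (𝓝[s \ {t}] t) (𝓝 c') := by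
    simpa [ContinuousWithinAt, hq] using hq_cont.mono Set.sdiff_subset
  have slope_comp (u : ℝ) : slope φ t u • q (φ u) = slope (c ∘ φ) t u := by
    by_cases h : φ u = φ t
    · simp [slope, h]
    · rw [hq, Function.update_of_ne h, slope_def_module, slope_def_module, slope_def_module,
        smul_eq_mul, mul_smul, smul_inv_smul₀ (sub_ne_zero.2 h), Function.comp_apply,
        Function.comp_apply]
  exact ((hasDerivWithinAt_iff_tendsto_slope.1 hφ).smul hq_lim).congr slope_comp

theorem smul [ContinuousAdd M] (hθ : HasDerivWithinAt θ θ' s t)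
    (hc : HasTVSDerivWithinAt c c' s t) :
    HasTVSDerivWithinAt (θ • c) (θ t • c' + θ' • c t) s t := by
  have hθ_lim : Tendsto θ (𝓝[s \ {t}] t) (𝓝 (θ t)) :=
    hθ.continuousWithinAt.mono Set.sdiff_subset
  have slope_smul (u : ℝ) : θ u • slope c t u + slope θ t u • c t = slope (θ • c) t u := by
    simp only [slope_def_module, Pi.smul_apply', smul_eq_mul, smul_sub, sub_smul, mul_smul,
      smul_comm (θ u)]
    abel
  exact ((hθ_lim.smul hc).add
    ((hasDerivWithinAt_iff_tendsto_slope.1 hθ).smul_const (c t))).congr slope_smul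

end HasTVSDerivWithinAt

namespace TVSSmoothOn

theorem continuousOn (hc : TVSSmoothOn c s) : ContinuousOn c s := by
  obtain ⟨D, rfl, -, hcont⟩ := hc
  exact hcont 0

theorem exists_deriv (hc : TVSSmoothOn c s) :
    ∃ e, TVSSmoothOn e s ∧ ∀ t ∈ s, HasTVSDerivWithinAt c (e t) s t := by
  obtain ⟨D, rfl, hderiv, hcont⟩ := hc
  exact ⟨D 1, ⟨fun n => D (n + 1), rfl, fun n => hderiv (n + 1), fun n => hcont (n + 1)⟩,
    hderiv 0⟩

theorem coinduction {S : Set (ℝ → M)} (hcont : ∀ c ∈ S, ContinuousOn c s)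
    (hderiv : ∀ c ∈ S, ∃ e ∈ S, ∀ t ∈ s, HasTVSDerivWithinAt c (e t) s t) (hc : c ∈ S) :
    TVSSmoothOn c s := by
  choose! next next_mem hasDeriv_next using hderiv
  have iterate_mem (n : ℕ) : next^[n] c ∈ S := Set.MapsTo.iterate next_mem n hc
  refine ⟨fun n => next^[n] c, rfl, fun n => ?_, fun n => hcont _ (iterate_mem n)⟩
  simpa only [Function.iterate_succ_apply'] using hasDeriv_next _ (iterate_mem n)

theorem of_mem_closure [ContinuousAdd M] {S : Set (ℝ → M)}
    (hcont : ∀ c ∈ S, ContinuousOn c s)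
    (hderiv : ∀ c ∈ S, ∃ e ∈ AddSubmonoid.closure S, ∀ t ∈ s, HasTVSDerivWithinAt c (e t) s t)
    (hc : c ∈ AddSubmonoid.closure S) : TVSSmoothOn c s := by
  refine coinduction (S := AddSubmonoid.closure S) (fun c hc => ?_) (fun c hc => ?_) hc
  · induction hc using AddSubmonoid.closure_induction with
    | mem c hc => exact hcont c hc
    | zero => exact continuousOn_const
    | add c e _ _ ihc ihe => exact ihc.add ihe
  · induction hc using AddSubmonoid.closure_induction with
    | mem c hc => exact hderiv c hc
    | zero => exact ⟨0, zero_mem _, fun t _ => hasTVSDerivWithinAt_const 0 s t⟩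
    | add c e _ _ ihc ihe =>
      obtain ⟨c', hc'_mem, hc'⟩ := ihc
      obtain ⟨e', he'_mem, he'⟩ := ihe
      exact ⟨c' + e', add_mem hc'_mem he'_mem, fun t ht => (hc' t ht).add (he' t ht)⟩

theorem const (m : M) (s : Set ℝ) : TVSSmoothOn (fun _ => m) s :=
  coinduction (S := Set.range fun m _ => m) (by rintro _ ⟨m, rfl⟩; exact continuousOn_const)
    (by rintro _ ⟨m, rfl⟩; exact ⟨_, ⟨0, rfl⟩, fun t _ => hasTVSDerivWithinAt_const m s t⟩)
    ⟨m, rfl⟩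

variable [ContinuousAdd M]

theorem add (hc : TVSSmoothOn c s) (he : TVSSmoothOn e s) : TVSSmoothOn (c + e) s :=
  of_mem_closure (S := {c | TVSSmoothOn c s}) (fun _ h => h.continuousOn)
    (fun _ h => let ⟨d, hd, hderiv⟩ := h.exists_deriv
      ⟨d, AddSubmonoid.subset_closure hd, hderiv⟩)
    (add_mem (AddSubmonoid.subset_closure hc) (AddSubmonoid.subset_closure he))

variable [ContinuousSMul ℝ M]

theorem smul_comp (hθ : ContDiff ℝ ∞ θ) (hc : TVSSmoothOn c s') (hφ : ContDiff ℝ ∞ φ)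
    (hmaps : Set.MapsTo φ s s') : TVSSmoothOn (θ • (c ∘ φ)) s := by
  let S : Set (ℝ → M) :=
    {e | ∃ (θ : ℝ → ℝ) (c : ℝ → M), ContDiff ℝ ∞ θ ∧ TVSSmoothOn c s' ∧ e = θ • (c ∘ φ)}
  refine of_mem_closure (S := S) ?_ ?_ (AddSubmonoid.subset_closure ⟨θ, c, hθ, hc, rfl⟩)
  · rintro _ ⟨θ, c, hθ, hc, rfl⟩
    exact hθ.continuous.continuousOn.smul
      (hc.continuousOn.comp hφ.continuous.continuousOn hmaps)
  · rintro _ ⟨θ, c, hθ, hc, rfl⟩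
    obtain ⟨e, he, hderiv⟩ := hc.exists_deriv
    obtain ⟨hθ_diff, hθ'⟩ := contDiff_infty_iff_deriv.1 hθ
    obtain ⟨hφ_diff, hφ'⟩ := contDiff_infty_iff_deriv.1 hφ
    refine ⟨(θ * deriv φ) • (e ∘ φ) + deriv θ • (c ∘ φ),
      add_mem (AddSubmonoid.subset_closure ⟨_, e, hθ.mul hφ', he, rfl⟩)
        (AddSubmonoid.subset_closure ⟨_, c, hθ', hc, rfl⟩), fun t ht => ?_⟩
    simpa [mul_smul] using
      ((hderiv _ (hmaps ht)).comp (hφ_diff t).hasDerivAt.hasDerivWithinAt hmaps).smul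
        (hθ_diff t).hasDerivAt.hasDerivWithinAt

theorem comp (hc : TVSSmoothOn c s') (hφ : ContDiff ℝ ∞ φ) (hmaps : Set.MapsTo φ s s') :
    TVSSmoothOn (c ∘ φ) s := by
  simpa using smul_comp (θ := 1) contDiff_const hc hφ hmaps

end TVSSmoothOn

end TVSCalculus

/-- The value at a fixed time of a homotopy `F₀ + F₁ dt`: a continuous dg algebra map `φ`
together with a continuous derivation `δ` of degree `-1` along `φ`, both unbundled so as to match
the clauses of `IsSmoothAlgHomotopy` that do not involve the topology of `[0,1]`. -/
structure IsHomotopySlice (A B : DGA ℝ) [TopologicalSpace A.A] [TopologicalSpace B.A]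
    (φ δ : A.A → B.A) : Prop where
  map_add : ∀ a b, φ (a + b) = φ a + φ b
  map_smul : ∀ (r : ℝ) a, φ (r • a) = r • φ a
  map_one : φ 1 = 1
  map_mul : ∀ a b, φ (a * b) = φ a * φ b
  map_mem : ∀ (i : ℤ), ∀ a ∈ A.gr i, φ a ∈ B.gr i
  map_d : ∀ a, φ (A.d a) = B.d (φ a)
  continuous_map : Continuous φ
  der_add : ∀ a b, δ (a + b) = δ a + δ b
  der_smul : ∀ (r : ℝ) a, δ (r • a) = r • δ a
  der_one : δ 1 = 0
  der_mul : ∀ (i : ℤ), ∀ a ∈ A.gr i, ∀ b,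
    δ (a * b) = (((-1 : ℤˣ) ^ i : ℤˣ) : ℤ) • (φ a * δ b) + δ a * φ b
  der_mem : ∀ (i : ℤ), ∀ a ∈ A.gr i, δ a ∈ B.gr (i - 1)
  continuous_der : Continuous δ

section Homotopy

variable {A B : DGA ℝ} [TopologicalSpace A.A] [TopologicalSpace B.A]

namespace IsHomotopySlice

theorem of_dgaHom (f : DGAHom A B) (hf : Continuous f.toFun) :
    IsHomotopySlice A B f.toFun fun _ => 0 where
  map_add := _root_.map_add f.toFun
  map_smul := _root_.map_smul f.toFun
  map_one := _root_.map_one f.toFun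
  map_mul := _root_.map_mul f.toFun
  map_mem := f.map_gr
  map_d := f.map_d
  continuous_map := hf
  der_add := by simp
  der_smul := by simp
  der_one := rfl
  der_mul := by simp
  der_mem _ _ _ := zero_mem _
  continuous_der := continuous_const

theorem const_smul [ContinuousConstSMul ℝ B.A] {φ δ : A.A → B.A} (h : IsHomotopySlice A B φ δ)
    (r : ℝ) : IsHomotopySlice A B φ (r • δ) where
  __ := h
  der_add a b := by simp only [Pi.smul_apply, h.der_add, smul_add]
  der_smul k a := by simp only [Pi.smul_apply, h.der_smul, smul_comm k r]
  der_one := by simp only [Pi.smul_apply, h.der_one, smul_zero]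
  der_mul i a ha b := by
    simp only [Pi.smul_apply, h.der_mul i a ha, smul_add, mul_smul_comm, smul_mul_assoc]
    rw [smul_comm]
  der_mem i a ha := Submodule.smul_mem _ r (h.der_mem i a ha)
  continuous_der := h.continuous_der.const_smul r

end IsHomotopySlice

theorem isSmoothAlgHomotopy_iff {f g : A.A → B.A} {F₀ F₁ : A.A → ℝ → B.A} :
    IsSmoothAlgHomotopy A B f g F₀ F₁ ↔
      (∀ t, IsHomotopySlice A B (F₀ · t) (F₁ · t)) ∧
      (∀ a, ∀ t ∈ Set.Icc (0 : ℝ) 1,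
        HasTVSDerivWithinAt (F₀ a) (F₁ (A.d a) t + B.d (F₁ a t)) (Set.Icc 0 1) t) ∧
      (∀ a, TVSSmoothOn (F₀ a) (Set.Icc 0 1) ∧ TVSSmoothOn (F₁ a) (Set.Icc 0 1)) ∧
      ∀ a, F₀ a 0 = f a ∧ F₀ a 1 = g a := by
  constructor
  · rintro ⟨add₀, add₁, smul₀, smul₁, one₀, one₁, mul₀, mul₁, gr, d, deriv, smooth, cont, ends⟩
    exact ⟨fun t => ⟨(add₀ · · t), (smul₀ · · t), one₀ t, (mul₀ · · t),
      fun i a ha => (gr i a ha t).1, (d · t), (cont t).1, (add₁ · · t), (smul₁ · · t), one₁ t,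
      fun i a ha b => mul₁ i a ha b t, fun i a ha => (gr i a ha t).2, (cont t).2⟩,
      deriv, smooth, ends⟩
  · rintro ⟨slice, deriv, smooth, ends⟩
    exact ⟨fun a b t => (slice t).map_add a b, fun a b t => (slice t).der_add a b,
      fun r a t => (slice t).map_smul r a, fun r a t => (slice t).der_smul r a,
      fun t => (slice t).map_one, fun t => (slice t).der_one,
      fun a b t => (slice t).map_mul a b, fun i a ha b t => (slice t).der_mul i a ha b,
      fun i a ha t => ⟨(slice t).map_mem i a ha, (slice t).der_mem i a ha⟩,
      fun a t => (slice t).map_d a, deriv, smooth,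
      fun t => ⟨(slice t).continuous_map, (slice t).continuous_der⟩, ends⟩

namespace IsSmoothAlgHomotopy

variable {f g h : A.A → B.A} {F₀ F₁ G₀ G₁ : A.A → ℝ → B.A}

theorem apply_zero (H : IsSmoothAlgHomotopy A B f g F₀ F₁) (a : A.A) : F₀ a 0 = f a :=
  ((isSmoothAlgHomotopy_iff.1 H).2.2.2 a).1

theorem apply_one (H : IsSmoothAlgHomotopy A B f g F₀ F₁) (a : A.A) : F₀ a 1 = g a :=
  ((isSmoothAlgHomotopy_iff.1 H).2.2.2 a).2

theorem const (f : DGAHom A B) (hf : Continuous f.toFun) :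
    IsSmoothAlgHomotopy A B f.toFun f.toFun (fun a _ => f.toFun a) (fun _ _ => 0) := by
  refine isSmoothAlgHomotopy_iff.2 ⟨fun _ => .of_dgaHom f hf, fun a t _ => ?_,
    fun a => ⟨.const _ _, .const _ _⟩, fun a => ⟨rfl, rfl⟩⟩
  simpa using hasTVSDerivWithinAt_const (f.toFun a) _ t

variable [ContinuousAdd B.A]

theorem concat (H : IsSmoothAlgHomotopy A B f g F₀ F₁) (K : IsSmoothAlgHomotopy A B g h G₀ G₁)
    (τ : ℝ) (hF : ∀ a, ∀ t, τ ≤ t → F₀ a t = g a ∧ F₁ a t = 0)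
    (hG : ∀ a, ∀ t, t ≤ τ → G₀ a t = g a ∧ G₁ a t = 0) :
    IsSmoothAlgHomotopy A B f h (fun a t => F₀ a t + G₀ a t - g a) (F₁ + G₁) := by
  obtain ⟨sliceF, derivF, smoothF, -⟩ := isSmoothAlgHomotopy_iff.1 H
  obtain ⟨sliceG, derivG, smoothG, -⟩ := isSmoothAlgHomotopy_iff.1 K
  have sum_eq (a : A.A) : (fun t => F₀ a t + G₀ a t - g a) = F₀ a + G₀ a + fun _ => -g a := by
    ext t
    simp only [Pi.add_apply, sub_eq_add_neg]
  refine isSmoothAlgHomotopy_iff.2 ⟨fun t => ?_, fun a t ht => ?_, fun a => ⟨?_, ?_⟩,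
    fun a => ⟨?_, ?_⟩⟩
  · rcases le_total t τ with ht | ht
    · simpa [hG _ t ht] using sliceF t
    · simpa [hF _ t ht] using sliceG t
  · rw [sum_eq]
    convert ((derivF a t ht).add (derivG a t ht)).add (hasTVSDerivWithinAt_const (-g a) _ t) using 1
    simp only [Pi.add_apply, _root_.map_add]
    abel
  · rw [sum_eq]
    exact ((smoothF a).1.add (smoothG a).1).add (.const _ _)
  · exact (smoothF a).2.add (smoothG a).2
  · rw [H.apply_zero, K.apply_zero, add_sub_cancel_right]
  · rw [H.apply_one, K.apply_one, add_sub_cancel_left]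

variable [ContinuousSMul ℝ B.A]

theorem reparam (H : IsSmoothAlgHomotopy A B f g F₀ F₁) {φ : ℝ → ℝ} (hφ : ContDiff ℝ ∞ φ)
    (hmaps : Set.MapsTo φ (Set.Icc 0 1) (Set.Icc 0 1)) :
    IsSmoothAlgHomotopy A B (F₀ · (φ 0)) (F₀ · (φ 1))
      (fun a => F₀ a ∘ φ) (fun a => deriv φ • (F₁ a ∘ φ)) := by
  obtain ⟨slice, hderiv, smooth, -⟩ := isSmoothAlgHomotopy_iff.1 H
  obtain ⟨hφ_diff, hφ'⟩ := contDiff_infty_iff_deriv.1 hφ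
  refine isSmoothAlgHomotopy_iff.2 ⟨fun t => (slice (φ t)).const_smul (deriv φ t),
    fun a t ht => ?_, fun a => ⟨(smooth a).1.comp hφ hmaps, .smul_comp hφ' (smooth a).2 hφ hmaps⟩,
    fun a => ⟨rfl, rfl⟩⟩
  simpa using (hderiv a _ (hmaps ht)).comp (hφ_diff t).hasDerivAt.hasDerivWithinAt hmaps

theorem exists_stationary (H : IsSmoothAlgHomotopy A B f g F₀ F₁) {ψ : ℝ → ℝ}
    (hψ : ContDiff ℝ ∞ ψ) (hψ₀ : ψ 0 ≤ 0) (hψ₁ : 1 ≤ ψ 1) :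
    ∃ G₀ G₁, IsSmoothAlgHomotopy A B f g G₀ G₁ ∧
      (∀ a, ∀ t, ψ t ≤ 0 → G₀ a t = f a ∧ G₁ a t = 0) ∧
      ∀ a, ∀ t, 1 ≤ ψ t → G₀ a t = g a ∧ G₁ a t = 0 := by
  let φ : ℝ → ℝ := fun t => Real.smoothTransition (ψ t)
  have hφ : ContDiff ℝ ∞ φ := Real.smoothTransition.contDiff.comp hψ
  have φ_eq_zero {t : ℝ} (ht : ψ t ≤ 0) : φ t = 0 := Real.smoothTransition.zero_of_nonpos ht
  have φ_eq_one {t : ℝ} (ht : 1 ≤ ψ t) : φ t = 1 := Real.smoothTransition.one_of_one_le ht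
  have deriv_eq_zero_of_min {t : ℝ} (ht : ψ t ≤ 0) : deriv φ t = 0 :=
    IsLocalMin.deriv_eq_zero <| .of_forall fun _ =>
      (φ_eq_zero ht).trans_le (Real.smoothTransition.nonneg _)
  have deriv_eq_zero_of_max {t : ℝ} (ht : 1 ≤ ψ t) : deriv φ t = 0 :=
    IsLocalMax.deriv_eq_zero <| .of_forall fun _ =>
      (Real.smoothTransition.le_one _).trans_eq (φ_eq_one ht).symm
  have hF := H.reparam hφ fun t _ =>
    ⟨Real.smoothTransition.nonneg (ψ t), Real.smoothTransition.le_one (ψ t)⟩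
  simp only [φ_eq_zero hψ₀, φ_eq_one hψ₁, H.apply_zero, H.apply_one] at hF
  exact ⟨_, _, hF,
    fun a t ht => by simp [φ_eq_zero ht, deriv_eq_zero_of_min ht, H.apply_zero],
    fun a t ht => by simp [φ_eq_one ht, deriv_eq_zero_of_max ht, H.apply_one]⟩

end IsSmoothAlgHomotopy

namespace SmoothlyHomotopicHoms

theorem refl (f : DGAHom A B) (hf : Continuous f.toFun) : SmoothlyHomotopicHoms A B f f :=
  ⟨_, _, .const f hf⟩

variable [ContinuousAdd B.A] [ContinuousSMul ℝ B.A] {f g h : DGAHom A B}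

theorem symm : SmoothlyHomotopicHoms A B f g → SmoothlyHomotopicHoms A B g f := by
  rintro ⟨F₀, F₁, H⟩
  have hmaps : Set.MapsTo (fun t : ℝ => 1 - t) (Set.Icc 0 1) (Set.Icc 0 1) :=
    fun t ht => ⟨sub_nonneg.2 ht.2, sub_le_self 1 ht.1⟩
  have hrev := H.reparam (contDiff_const.sub contDiff_id) hmaps
  simp only [id, sub_zero, sub_self, H.apply_zero, H.apply_one] at hrev
  exact ⟨_, _, hrev⟩

theorem trans : SmoothlyHomotopicHoms A B f g → SmoothlyHomotopicHoms A B g h →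
    SmoothlyHomotopicHoms A B f h := by
  rintro ⟨F₀, F₁, H⟩ ⟨G₀, G₁, K⟩
  obtain ⟨_, _, H', -, hH'⟩ := H.exists_stationary (ψ := fun t => 2 * t) (by fun_prop)
    (by norm_num) (by norm_num)
  obtain ⟨_, _, K', hK', -⟩ := K.exists_stationary (ψ := fun t => 2 * t - 1) (by fun_prop)
    (by norm_num) (by norm_num)
  exact ⟨_, _, H'.concat K' (1 / 2) (fun a t ht => hH' a t (by linarith))
    fun a t ht => hK' a t (by linarith)⟩

end SmoothlyHomotopicHoms

end Homotopy

theorem smooth_homotopy_is_equivalence_relation_general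
    (A B : DGA ℝ) [TopologicalSpace A.A] [TopologicalSpace B.A]
    [ContinuousAdd B.A] [ContinuousSMul ℝ B.A] :
    Equivalence (fun f g : {h : DGAHom A B // Continuous h.toFun} =>
      SmoothlyHomotopicHoms A B f.1 g.1) where
  refl f := .refl f.1 f.2
  symm := .symm
  trans := .trans

/-- **Theorem.** The relation of smooth homotopy on continuous dg algebra morphisms
between dg Arens-Michael algebras is an equivalence relation (in particular, it is
transitive). -/
theorem smooth_homotopy_is_equivalence_relation
    (A B : DGA ℝ)
    [UniformSpace A.A] [CompleteSpace A.A] [T2Space A.A] [IsTopologicalRing A.A]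
    [ContinuousSMul ℝ A.A]
    [UniformSpace B.A] [CompleteSpace B.A] [T2Space B.A] [IsTopologicalRing B.A]
    [ContinuousSMul ℝ B.A]
    (hA : LocallyMConvex A.A) (hB : LocallyMConvex B.A)
    (hdA : Continuous A.d) (hdB : Continuous B.d) :
    Equivalence (fun f g : {h : DGAHom A B // Continuous h.toFun} =>
      SmoothlyHomotopicHoms A B f.1 g.1) :=
  smooth_homotopy_is_equivalence_relation_general A B
end

section
/- A strong homotopy equivalence between two dg algebras A and B over a commutative ring k induces a bijection MChmod(A) ≅ MChmod(B) between their Maurer-Cartan homotopy moduli sets. -/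
open DirectSum

/-! ## Topological simplices and singular simplices -/

/-- The standard topological `n`-simplex. -/
def TopSimplex (n : ℕ) : Type :=
  {f : Fin (n + 1) → ℝ // (∀ i, 0 ≤ f i) ∧ ∑ i, f i = 1}

instance (n : ℕ) : TopologicalSpace (TopSimplex n) :=
  inferInstanceAs (TopologicalSpace {f : Fin (n + 1) → ℝ // (∀ i, 0 ≤ f i) ∧ ∑ i, f i = 1})

/-- The affine map of topological simplices induced by a map of vertices. -/
def vertAffine {m n : ℕ} (v : Fin (m + 1) → Fin (n + 1)) :
    C(TopSimplex m, TopSimplex n) where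
  toFun f := ⟨fun j => ∑ i ∈ Finset.univ.filter (fun i => v i = j), f.1 i,
    ⟨fun j => Finset.sum_nonneg fun i _ => f.2.1 i, by
      rw [Finset.sum_fiberwise_of_maps_to (fun i _ => Finset.mem_univ (v i)) f.1]
      exact f.2.2⟩⟩
  continuous_toFun := by
    apply Continuous.subtype_mk
    exact continuous_pi fun j => continuous_finset_sum _ fun i _ =>
      (continuous_apply i).comp continuous_subtype_val

/-- The `i`-th face inclusion of topological simplices. -/
def faceMap {n : ℕ} (i : Fin (n + 2)) : C(TopSimplex n, TopSimplex (n + 1)) :=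
  vertAffine fun j => i.succAbove j

/-- The `i`-th degeneracy (collapse) map of topological simplices. -/
def degenMap {n : ℕ} (i : Fin (n + 1)) : C(TopSimplex (n + 1), TopSimplex n) :=
  vertAffine fun j => i.predAbove j

/-- The inclusion of the front `p`-face of the `n`-simplex. -/
def frontMap (p n : ℕ) (h : p ≤ n) : C(TopSimplex p, TopSimplex n) :=
  vertAffine fun j => Fin.castLE (by omega) j

/-- The inclusion of the back `q`-face of the `n`-simplex. -/
def backMap (q n : ℕ) (h : q ≤ n) : C(TopSimplex q, TopSimplex n) :=
  vertAffine fun j : Fin (q + 1) => (⟨n - q + (j : ℕ), by have := j.isLt; omega⟩ : Fin (n + 1))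

/-- The `j`-th vertex of the topological `n`-simplex. -/
def vertexPt (n : ℕ) (j : Fin (n + 1)) : TopSimplex n :=
  ⟨fun i => if i = j then 1 else 0,
    ⟨fun i => by dsimp only; split <;> norm_num, by simp⟩⟩

/-- The set of singular `n`-simplices of a topological space. -/
def SingN (X : Type) [TopologicalSpace X] (n : ℕ) : Type := C(TopSimplex n, X)

/-- A singular `(n+1)`-simplex is degenerate if it factors through a degeneracy map. -/
def IsDegenSimplex {X : Type} [TopologicalSpace X] {n : ℕ} (σ : SingN X (n + 1)) : Prop :=
  ∃ (i : Fin (n + 1)) (τ : SingN X n), σ = (τ : C(TopSimplex n, X)).comp (degenMap i)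

/-- The constant singular `0`-simplex of `[0,1]` at `0`. -/
def const0 : SingN unitInterval 0 := ContinuousMap.const _ 0

/-- The constant singular `0`-simplex of `[0,1]` at `1`. -/
def const1 : SingN unitInterval 0 := ContinuousMap.const _ 1

/-! ## Strong homotopy of dg algebra morphisms -/

/-- An elementary strong homotopy between two dg algebra maps `f, g : A → B`: a dg
algebra map `H : A → B ⊗ I*` (where `I*` is the normalized singular cochain algebra of
`[0,1]`, the tensor product being completed) restricting to `f` and `g` at the two
endpoints.  `B ⊗ I*` is identified with normalized `B`-valued singular cochains on
`[0,1]`, so `H` is given by its components `H a n σ ∈ B^{i-n}` for `a ∈ A^i` and `σ` a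
singular `n`-simplex; multiplicativity is the Alexander-Whitney convolution formula
with Koszul signs, and compatibility with differentials uses the singular coboundary. -/
def IsElemStrongHomotopy {k : Type} [CommRing k] (A B : DGA k) (f g : A.A → B.A)
    (H : A.A → ∀ n, SingN unitInterval n → B.A) : Prop :=
  (∀ a b n σ, H (a + b) n σ = H a n σ + H b n σ) ∧
  (∀ (c : k) a n σ, H (c • a) n σ = c • H a n σ) ∧
  (∀ a (n : ℕ) (i : Fin (n + 1)) (τ : SingN unitInterval n),
    H a (n + 1) (ContinuousMap.comp τ (degenMap i)) = 0) ∧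
  (∀ (i : ℤ), ∀ a ∈ A.gr i, ∀ (n : ℕ) σ, H a n σ ∈ B.gr (i - (n : ℤ))) ∧
  (∀ σ, H 1 0 σ = 1) ∧ (∀ (n : ℕ) σ, H 1 (n + 1) σ = 0) ∧
  (∀ (i j : ℤ), ∀ a ∈ A.gr i, ∀ b ∈ A.gr j, ∀ (n : ℕ) (σ : SingN unitInterval n),
    H (a * b) n σ =
      ∑ p : Fin (n + 1),
        (((-1 : ℤˣ) ^ (((p : ℕ) : ℤ) * (j - ((n : ℤ) - ((p : ℕ) : ℤ)))) : ℤˣ) : ℤ) •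
          (H a (p : ℕ) (ContinuousMap.comp σ (frontMap (p : ℕ) n (Nat.le_of_lt_succ p.isLt))) *
            H b (n - (p : ℕ)) (ContinuousMap.comp σ (backMap (n - (p : ℕ)) n (by omega))))) ∧
  (∀ (i : ℤ), ∀ a ∈ A.gr i,
    (∀ σ : SingN unitInterval 0, H (A.d a) 0 σ = B.d (H a 0 σ)) ∧
    (∀ (n : ℕ) (σ : SingN unitInterval (n + 1)),
      H (A.d a) (n + 1) σ =
        B.d (H a (n + 1) σ) +
          (((-1 : ℤˣ) ^ (i - (n : ℤ)) : ℤˣ) : ℤ) •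
            ∑ i' : Fin (n + 2), (((-1 : ℤˣ) ^ (i' : ℕ) : ℤˣ) : ℤ) •
              H a n (ContinuousMap.comp σ (faceMap i')))) ∧
  (∀ a, H a 0 const0 = f a ∧ H a 0 const1 = g a)

/-- Two dg algebra morphisms are strongly homotopic if they are related by the
equivalence relation generated by elementary strong homotopies. -/
def StronglyHomotopicHoms {k : Type} [CommRing k] (A B : DGA k) :
    DGAHom A B → DGAHom A B → Prop :=
  Relation.EqvGen (fun f g => ∃ H, IsElemStrongHomotopy A B f.toFun g.toFun H)

/-- Two dg algebras are strongly homotopy equivalent if there are dg algebra maps in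
both directions whose composites are strongly homotopic to the identities. -/
def StronglyHomotopyEquivalent {k : Type} [CommRing k] (A B : DGA k) : Prop :=
  ∃ (f : DGAHom A B) (g : DGAHom B A),
    StronglyHomotopicHoms B B (f.comp g) (DGAHom.id' B) ∧
    StronglyHomotopicHoms A A (g.comp f) (DGAHom.id' A)

/-!
An elementary strong homotopy `H : A → B ⊗ I*` carries a Maurer-Cartan element `x` to a
Maurer-Cartan cochain `c`. On a vertex `c` is a Maurer-Cartan element of `B`; on an edge the
equation says that `1 + c(edge)` intertwines the twistings at the two ends; on a triangle it says
that composing these intertwiners along two sides agrees, up to a homotopy, with the third side.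
For the triangle that runs along an edge and back, the third side is degenerate and contributes `1`,
so going along an edge and going back are inverse homotopy equivalences: `f x` and `g x` are
homotopy gauge equivalent. Hence strongly homotopic maps agree on `MChmod`.
-/

theorem vertAffine_id (n : ℕ) : vertAffine (id : Fin (n + 1) → Fin (n + 1)) = .id _ := by
  refine ContinuousMap.ext fun t => Subtype.ext (funext fun j => ?_)
  change ∑ i with i = j, t.1 i = t.1 j
  rw [Finset.sum_filter, Finset.sum_ite_eq' Finset.univ j t.1, if_pos (Finset.mem_univ j)]

theorem vertAffine_comp {l m n : ℕ} (v : Fin (m + 1) → Fin (n + 1))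
    (w : Fin (l + 1) → Fin (m + 1)) :
    (vertAffine v).comp (vertAffine w) = vertAffine (v ∘ w) := by
  refine ContinuousMap.ext fun t => Subtype.ext (funext fun j => ?_)
  change ∑ i with v i = j, ∑ h with w h = i, t.1 h = ∑ h with v (w h) = j, t.1 h
  rw [← Finset.sum_fiberwise_of_maps_to (t := {i | v i = j}) (g := w) (by simp)]
  refine Finset.sum_congr rfl fun i hi => Finset.sum_congr ?_ fun _ _ => rfl
  ext h
  have hi : v i = j := (Finset.mem_filter.1 hi).2
  simp only [Finset.mem_filter, Finset.mem_univ, true_and]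
  exact ⟨fun hw => ⟨hw ▸ hi, hw⟩, And.right⟩

theorem comp_vertAffine_comp_of_comp_eq {X : Type} [TopologicalSpace X] {l m n : ℕ}
    {σ : C(TopSimplex n, X)} {v : Fin (m + 1) → Fin (n + 1)} {w : Fin (l + 1) → Fin (m + 1)}
    {u : Fin (l + 1) → Fin (n + 1)} (h : v ∘ w = u) :
    (σ.comp (vertAffine v)).comp (vertAffine w) = σ.comp (vertAffine u) := by
  rw [ContinuousMap.comp_assoc, vertAffine_comp, h]

theorem comp_vertAffine_comp_of_comp_eq_id {X : Type} [TopologicalSpace X] {m n : ℕ}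
    {σ : C(TopSimplex n, X)} {v : Fin (m + 1) → Fin (n + 1)} {w : Fin (n + 1) → Fin (m + 1)}
    (h : v ∘ w = id) : (σ.comp (vertAffine v)).comp (vertAffine w) = σ := by
  rw [comp_vertAffine_comp_of_comp_eq h, vertAffine_id, ContinuousMap.comp_id]

theorem comp_frontMap_self {X : Type} [TopologicalSpace X] {n : ℕ} (σ : SingN X n) :
    ContinuousMap.comp σ (frontMap n n le_rfl) = σ :=
  (congrArg (ContinuousMap.comp σ) (vertAffine_id n)).trans σ.comp_id

theorem comp_backMap_self {X : Type} [TopologicalSpace X] {n : ℕ} (σ : SingN X n) :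
    ContinuousMap.comp σ (backMap n n le_rfl) = σ := by
  have backMap_self : backMap n n le_rfl = .id _ := by
    rw [← vertAffine_id]
    refine congrArg vertAffine (funext fun j => Fin.ext ?_)
    change n - n + (j : ℕ) = j
    omega
  rw [backMap_self]
  exact σ.comp_id

theorem frontMap_succ (n : ℕ) : frontMap n (n + 1) n.le_succ = faceMap (Fin.last (n + 1)) :=
  congrArg vertAffine (funext fun j => (Fin.succAbove_last_apply j).symm)

theorem backMap_succ (n : ℕ) : backMap n (n + 1) n.le_succ = faceMap 0 := by
  refine congrArg vertAffine (funext fun j => Fin.ext ?_)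
  rw [Fin.succAbove_zero, Fin.val_succ]
  change n + 1 - n + (j : ℕ) = j + 1
  omega

/-- The edge `[0,1]` of `[0,1]`, running from `0` to `1`, as a singular `1`-simplex. -/
def unitIntervalEdge : SingN unitInterval 1 where
  toFun t := ⟨t.1 1, t.2.1 1,
    (Finset.single_le_sum (fun i _ => t.2.1 i) (Finset.mem_univ 1)).trans t.2.2.le⟩
  continuous_toFun := ((continuous_apply 1).comp continuous_subtype_val).subtype_mk _

theorem unitIntervalEdge_comp_faceMap_one :
    ContinuousMap.comp unitIntervalEdge (faceMap 1) = const0 := by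
  refine ContinuousMap.ext fun t => Subtype.ext ?_
  change ∑ i : Fin 1 with (1 : Fin 2).succAbove i = 1, t.1 i = 0
  rw [Finset.filter_false_of_mem fun i _ => by fin_cases i; decide, Finset.sum_empty]

theorem unitIntervalEdge_comp_faceMap_zero :
    ContinuousMap.comp unitIntervalEdge (faceMap 0) = const1 := by
  refine ContinuousMap.ext fun t => Subtype.ext ?_
  change ∑ i : Fin 1 with (0 : Fin 2).succAbove i = 1, t.1 i = 1
  rw [Finset.filter_true_of_mem fun i _ => by fin_cases i; rfl]
  exact t.2.2

theorem DGA.d_one {k : Type} [CommRing k] (B : DGA k) : B.d 1 = 0 := by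
  simpa using B.leibniz 0 1 SetLike.GradedOne.one_mem 1

/-- `B`-valued singular cochains on `X`, the model of the completed tensor product of `B` with the
singular cochains of `X` used in `IsElemStrongHomotopy`. A cochain of total degree `i` takes values
in `B.gr (i - n)` on `n`-simplices; neither this nor normalization is built in. -/
abbrev SingCochain {k : Type} [CommRing k] (B : DGA k) (X : Type) [TopologicalSpace X] : Type :=
  ∀ n, SingN X n → B.A

namespace SingCochain

variable {k : Type} [CommRing k] {B : DGA k} {X : Type} [TopologicalSpace X]

/-- The differential of a cochain `c` of total degree `i`, with the signs of
`IsElemStrongHomotopy`. -/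
def d (i : ℤ) (c : SingCochain B X) : SingCochain B X
  | 0, σ => B.d (c 0 σ)
  | n + 1, σ => B.d (c (n + 1) σ) + (((-1 : ℤˣ) ^ (i - (n : ℤ)) : ℤˣ) : ℤ) •
      ∑ m : Fin (n + 2), (((-1 : ℤˣ) ^ (m : ℕ) : ℤˣ) : ℤ) • c n (ContinuousMap.comp σ (faceMap m))

/-- The Alexander-Whitney product of cochains, where `c` has total degree `j`, with the signs of
`IsElemStrongHomotopy`. -/
def cup (j : ℤ) (b c : SingCochain B X) : SingCochain B X := fun n σ =>
  ∑ p : Fin (n + 1), (((-1 : ℤˣ) ^ (((p : ℕ) : ℤ) * (j - ((n : ℤ) - ((p : ℕ) : ℤ)))) : ℤˣ) : ℤ) •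
    (b p (ContinuousMap.comp σ (frontMap p n (Nat.le_of_lt_succ p.isLt))) *
      c (n - p) (ContinuousMap.comp σ (backMap (n - p) n (Nat.sub_le n p))))

theorem d_one_apply (i : ℤ) (c : SingCochain B X) (σ : SingN X 1) :
    d i c 1 σ = B.d (c 1 σ) + (((-1 : ℤˣ) ^ i : ℤˣ) : ℤ) •
      (c 0 (ContinuousMap.comp σ (faceMap 0)) - c 0 (ContinuousMap.comp σ (faceMap 1))) := by
  rw [d, Fin.sum_univ_two]
  simp [sub_eq_add_neg]

theorem d_two_apply (i : ℤ) (c : SingCochain B X) (σ : SingN X 2) :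
    d i c 2 σ = B.d (c 2 σ) + (((-1 : ℤˣ) ^ (i - 1) : ℤˣ) : ℤ) •
      (c 1 (ContinuousMap.comp σ (faceMap 0)) - c 1 (ContinuousMap.comp σ (faceMap 1)) +
        c 1 (ContinuousMap.comp σ (faceMap 2))) := by
  rw [d, Fin.sum_univ_three]
  simp [sub_eq_add_neg]

theorem cup_one_apply (j : ℤ) (b c : SingCochain B X) (σ : SingN X 1) :
    cup j b c 1 σ = b 0 (ContinuousMap.comp σ (faceMap 1)) * c 1 σ +
      (((-1 : ℤˣ) ^ j : ℤˣ) : ℤ) • (b 1 σ * c 0 (ContinuousMap.comp σ (faceMap 0))) := by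
  rw [cup, Fin.sum_univ_two]
  change _ • (b 0 (ContinuousMap.comp σ (frontMap 0 1 _)) * c 1 (ContinuousMap.comp σ
    (backMap 1 1 _))) + _ • (b 1 (ContinuousMap.comp σ (frontMap 1 1 _)) *
      c 0 (ContinuousMap.comp σ (backMap 0 1 _))) = _
  rw [comp_frontMap_self, comp_backMap_self, frontMap_succ 0, backMap_succ 0]
  simp

theorem cup_two_apply (j : ℤ) (b c : SingCochain B X) (σ : SingN X 2) :
    cup j b c 2 σ = b 0 (ContinuousMap.comp σ (frontMap 0 2 zero_le_two)) * c 2 σ +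
      (((-1 : ℤˣ) ^ (j - 1) : ℤˣ) : ℤ) • (b 1 (ContinuousMap.comp σ (faceMap 2)) *
        c 1 (ContinuousMap.comp σ (faceMap 0))) +
      b 2 σ * c 0 (ContinuousMap.comp σ (backMap 0 2 zero_le_two)) := by
  rw [cup, Fin.sum_univ_three]
  change _ • (b 0 (ContinuousMap.comp σ (frontMap 0 2 _)) * c 2 (ContinuousMap.comp σ
    (backMap 2 2 _))) + _ • (b 1 (ContinuousMap.comp σ (frontMap 1 2 _)) *
      c 1 (ContinuousMap.comp σ (backMap 1 2 _))) +
      _ • (b 2 (ContinuousMap.comp σ (frontMap 2 2 _)) *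
        c 0 (ContinuousMap.comp σ (backMap 0 2 _))) = _
  rw [comp_frontMap_self, comp_backMap_self, frontMap_succ 1, backMap_succ 1]
  simp [zpow_mul]

/-- A normalized Maurer-Cartan cochain: a Maurer-Cartan element of the dg algebra of normalized
`B`-valued singular cochains on `X`. -/
structure IsMC (c : SingCochain B X) : Prop where
  mem_gr : ∀ (n : ℕ) (σ : SingN X n), c n σ ∈ B.gr (1 - (n : ℤ))
  degenerate : ∀ (n : ℕ) (i : Fin (n + 1)) (τ : SingN X n),
    c (n + 1) (ContinuousMap.comp τ (degenMap i)) = 0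
  d_add_cup_self : ∀ (n : ℕ) (σ : SingN X n), d 1 c n σ + cup 1 c c n σ = 0

/-- The element of `B` that a Maurer-Cartan cochain attaches to an edge `σ`; it intertwines the
twistings of `B` by the values of the cochain at the two ends of `σ`. -/
def holonomy (c : SingCochain B X) (σ : SingN X 1) : B.A := 1 + c 1 σ

namespace IsMC

variable {c : SingCochain B X}

theorem holonomy_mem_gr_zero (hc : c.IsMC) (σ : SingN X 1) : holonomy c σ ∈ B.gr 0 :=
  add_mem SetLike.GradedOne.one_mem (by simpa using hc.mem_gr 1 σ)

theorem holonomy_comp_degenMap (hc : c.IsMC) (i : Fin 1) (τ : SingN X 0) :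
    holonomy c (ContinuousMap.comp τ (degenMap i)) = 1 := by
  unfold holonomy
  rw [hc.degenerate, add_zero]

theorem holonomy_intertwines (hc : c.IsMC) (σ : SingN X 1) :
    B.d (holonomy c σ) + c 0 (ContinuousMap.comp σ (faceMap 1)) * holonomy c σ -
      holonomy c σ * c 0 (ContinuousMap.comp σ (faceMap 0)) = 0 := by
  have edge_eq := hc.d_add_cup_self 1 σ
  rw [d_one_apply, cup_one_apply] at edge_eq
  simp only [zpow_one, Units.val_neg, Units.val_one, neg_one_smul] at edge_eq
  rw [← edge_eq, holonomy, map_add, B.d_one]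
  noncomm_ring

theorem holonomy_mul_sub_holonomy (hc : c.IsMC) (σ : SingN X 2) :
    holonomy c (ContinuousMap.comp σ (faceMap 2)) * holonomy c (ContinuousMap.comp σ (faceMap 0)) -
      holonomy c (ContinuousMap.comp σ (faceMap 1)) =
    B.d (-c 2 σ) + (c 0 (ContinuousMap.comp σ (frontMap 0 2 zero_le_two)) * -c 2 σ +
      -c 2 σ * c 0 (ContinuousMap.comp σ (backMap 0 2 zero_le_two))) := by
  have triangle_eq := hc.d_add_cup_self 2 σ
  rw [d_two_apply, cup_two_apply] at triangle_eq
  simp only [sub_self, zpow_zero, Units.val_one, one_smul] at triangle_eq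
  rw [← sub_eq_zero, ← triangle_eq, map_neg]
  simp only [holonomy]
  noncomm_ring

theorem holonomy_mul_holonomy_rev (hc : c.IsMC) (σ : SingN X 1) :
    B.CohomologousToOne (c 0 (ContinuousMap.comp σ (faceMap 1)))
      (holonomy c σ * holonomy c (ContinuousMap.comp σ (vertAffine Fin.rev))) := by
  let τ : SingN X 2 := ContinuousMap.comp σ (vertAffine ![0, 1, 0])
  have front : ContinuousMap.comp τ (faceMap 2) = σ :=
    comp_vertAffine_comp_of_comp_eq_id (by decide)
  have back : ContinuousMap.comp τ (faceMap 0) = ContinuousMap.comp σ (vertAffine Fin.rev) :=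
    comp_vertAffine_comp_of_comp_eq (by decide)
  have middle : ContinuousMap.comp τ (faceMap 1) =
      ContinuousMap.comp (ContinuousMap.comp σ (faceMap 1)) (degenMap 0) :=
    (comp_vertAffine_comp_of_comp_eq (u := ![0, 0]) (by decide)).trans
      (comp_vertAffine_comp_of_comp_eq (by decide)).symm
  have first : ContinuousMap.comp τ (frontMap 0 2 zero_le_two) = ContinuousMap.comp σ (faceMap 1) :=
    comp_vertAffine_comp_of_comp_eq (by decide)
  have last : ContinuousMap.comp τ (backMap 0 2 zero_le_two) = ContinuousMap.comp σ (faceMap 1) :=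
    comp_vertAffine_comp_of_comp_eq (by decide)
  have middle_one : holonomy c (ContinuousMap.comp τ (faceMap 1)) = 1 := by
    rw [middle]
    exact hc.holonomy_comp_degenMap 0 _
  have triangle := hc.holonomy_mul_sub_holonomy τ
  rw [middle_one, front, back, first, last] at triangle
  exact ⟨-c 2 τ, neg_mem (by simpa using hc.mem_gr 2 τ), triangle⟩

theorem homotopyGaugeEquiv (hc : c.IsMC) (σ : SingN X 1) :
    B.HomotopyGaugeEquiv (c 0 (ContinuousMap.comp σ (faceMap 1)))
      (c 0 (ContinuousMap.comp σ (faceMap 0))) := by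
  let ρ : SingN X 1 := ContinuousMap.comp σ (vertAffine Fin.rev)
  have ρ_rev : ContinuousMap.comp ρ (vertAffine Fin.rev) = σ :=
    comp_vertAffine_comp_of_comp_eq_id (by decide)
  have ρ_start : ContinuousMap.comp ρ (faceMap 1) = ContinuousMap.comp σ (faceMap 0) :=
    comp_vertAffine_comp_of_comp_eq (by decide)
  have ρ_end : ContinuousMap.comp ρ (faceMap 0) = ContinuousMap.comp σ (faceMap 1) :=
    comp_vertAffine_comp_of_comp_eq (by decide)
  refine ⟨holonomy c ρ, hc.holonomy_mem_gr_zero ρ, holonomy c σ, hc.holonomy_mem_gr_zero σ,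
    ?_, hc.holonomy_intertwines σ, hc.holonomy_mul_holonomy_rev σ, ?_⟩
  · simpa only [ρ_start, ρ_end] using hc.holonomy_intertwines ρ
  · simpa only [ρ_start, ρ_rev] using hc.holonomy_mul_holonomy_rev ρ

end IsMC

end SingCochain

namespace DGAHom

variable {k : Type} [CommRing k] {A B : DGA k}

theorem map_isMC (f : DGAHom A B) {x : A.A} (hx : A.IsMC x) : B.IsMC (f.toFun x) :=
  ⟨f.map_gr 1 x hx.1, by rw [← f.map_d, ← map_mul, ← map_add, hx.2, map_zero]⟩

theorem map_cohomologousToOne (f : DGAHom A B) {x a : A.A} (h : A.CohomologousToOne x a) :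
    B.CohomologousToOne (f.toFun x) (f.toFun a) := by
  obtain ⟨s, hs, hsa⟩ := h
  refine ⟨f.toFun s, f.map_gr _ _ hs, ?_⟩
  simpa only [map_sub, map_one, map_add, map_mul, f.map_d] using congrArg f.toFun hsa

theorem map_homotopyGaugeEquiv (f : DGAHom A B) {x y : A.A} (h : A.HomotopyGaugeEquiv x y) :
    B.HomotopyGaugeEquiv (f.toFun x) (f.toFun y) := by
  obtain ⟨g, hg, h, hh, g_intertwines, h_intertwines, hg_one, gh_one⟩ := h
  refine ⟨f.toFun g, f.map_gr 0 g hg, f.toFun h, f.map_gr 0 h hh, ?_, ?_, ?_, ?_⟩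
  · simpa only [map_sub, map_add, map_mul, map_zero, f.map_d] using congrArg f.toFun g_intertwines
  · simpa only [map_sub, map_add, map_mul, map_zero, f.map_d] using congrArg f.toFun h_intertwines
  · simpa only [map_mul] using f.map_cohomologousToOne hg_one
  · simpa only [map_mul] using f.map_cohomologousToOne gh_one

/-- The map of homotopy moduli sets induced by a dg algebra map. -/
def mapMChmod (f : DGAHom A B) : A.MChmod → B.MChmod :=
  Quot.map (fun x : A.MCEl => (⟨f.toFun x.1, f.map_isMC x.2⟩ : B.MCEl))
    fun _ _ => f.map_homotopyGaugeEquiv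

theorem mapMChmod_id (A : DGA k) : (id' A).mapMChmod = id :=
  funext <| Quot.ind fun _ => rfl

theorem mapMChmod_comp {C : DGA k} (g : DGAHom B C) (f : DGAHom A B) :
    (g.comp f).mapMChmod = g.mapMChmod ∘ f.mapMChmod :=
  funext <| Quot.ind fun _ => rfl

end DGAHom

namespace IsElemStrongHomotopy

variable {k : Type} [CommRing k] {A B : DGA k} {f g : A.A → B.A}
  {H : A.A → ∀ n, SingN unitInterval n → B.A}

theorem isMC_apply (hH : IsElemStrongHomotopy A B f g H) {x : A.A} (hx : A.IsMC x) :
    SingCochain.IsMC (H x) := by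
  obtain ⟨map_add, map_smul, degenerate, mem_gr, -, -, map_mul, map_d, -⟩ := hH
  refine ⟨mem_gr 1 x hx.1, degenerate x, fun n σ => ?_⟩
  have map_d_x : H (A.d x) n σ = SingCochain.d 1 (H x) n σ := by
    cases n with
    | zero => exact (map_d 1 x hx.1).1 σ
    | succ n => exact (map_d 1 x hx.1).2 n σ
  have map_mul_self : H (x * x) n σ = SingCochain.cup 1 (H x) (H x) n σ :=
    map_mul 1 1 x hx.1 x hx.1 n σ
  have map_zero : H 0 n σ = 0 := by simpa using map_smul 0 0 n σ
  rw [← map_d_x, ← map_mul_self, ← map_add, hx.2, map_zero]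

theorem homotopyGaugeEquiv (hH : IsElemStrongHomotopy A B f g H) {x : A.A} (hx : A.IsMC x) :
    B.HomotopyGaugeEquiv (f x) (g x) := by
  have endpoints := (hH.isMC_apply hx).homotopyGaugeEquiv unitIntervalEdge
  obtain ⟨-, -, -, -, -, -, -, -, eval⟩ := hH
  rwa [unitIntervalEdge_comp_faceMap_one, unitIntervalEdge_comp_faceMap_zero, (eval x).1,
    (eval x).2] at endpoints

end IsElemStrongHomotopy

namespace StronglyHomotopicHoms

variable {k : Type} [CommRing k] {A B : DGA k}

theorem mapMChmod_eq {f g : DGAHom A B} (h : StronglyHomotopicHoms A B f g) :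
    f.mapMChmod = g.mapMChmod := by
  induction h with
  | rel f g h =>
    obtain ⟨H, hH⟩ := h
    exact funext <| Quot.ind fun x => Quot.sound (hH.homotopyGaugeEquiv x.2)
  | refl => rfl
  | symm _ _ _ ih => exact ih.symm
  | trans _ _ _ _ _ ih₁ ih₂ => exact ih₁.trans ih₂

theorem leftInverse_mapMChmod {f : DGAHom A B} {g : DGAHom B A}
    (h : StronglyHomotopicHoms A A (g.comp f) (DGAHom.id' A)) :
    Function.LeftInverse g.mapMChmod f.mapMChmod := by
  rw [Function.leftInverse_iff_comp, ← DGAHom.mapMChmod_comp, h.mapMChmod_eq,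
    DGAHom.mapMChmod_id]

end StronglyHomotopicHoms

/-- **Theorem.** A strong homotopy equivalence between two dg algebras `A` and `B` over
a commutative ring `k` induces a bijection `MChmod(A) ≅ MChmod(B)` between their
Maurer-Cartan homotopy moduli sets (induced by the map `f : A → B` of the
equivalence). -/
theorem strong_homotopy_equivalence_induces_MChmod_bijection
    {k : Type} [CommRing k] (A B : DGA k)
    (f : DGAHom A B) (g : DGAHom B A)
    (hfg : StronglyHomotopicHoms B B (f.comp g) (DGAHom.id' B))
    (hgf : StronglyHomotopicHoms A A (g.comp f) (DGAHom.id' A)) :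
    ∃ e : A.MChmod ≃ B.MChmod, ∀ (x : A.MCEl) (hy : B.IsMC (f.toFun x.1)),
      e (Quot.mk _ x) = Quot.mk _ (⟨f.toFun x.1, hy⟩ : B.MCEl) :=
  ⟨⟨f.mapMChmod, g.mapMChmod, hgf.leftInverse_mapMChmod, hfg.leftInverse_mapMChmod⟩,
    fun _ _ => rfl⟩
end

section
/- The simplicial set K∞, the nerve of the groupoid with two objects and two mutually inverse morphisms between them, is a retract of I, the singular simplicial set of the interval [0,1]: the inclusion K∞ ↪ I admits a simplicial retraction. -/
open CategoryTheory Simplicial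

/-- The simplicial set `K∞`: the nerve of the groupoid with two objects and two mutually
inverse morphisms between them.  Its `n`-simplices are vertex sequences, i.e. functions
`Fin (n+1) → Bool`; its two nondegenerate `n`-simplices are the alternating sequences,
corresponding to the affine simplices of `[0,1]` sending the vertices alternately to `0`
and `1`. -/
def KInf : SSet where
  obj m := Fin (m.unop.len + 1) → Bool
  map f := ↾fun ε => ε ∘ f.unop.toOrderHom

/-- An `n`-simplex of the singular simplicial set of a topological space, viewed as a
continuous map from the topological `n`-simplex. -/
def appAsMap {X : TopCat} (ι : KInf ⟶ TopCat.toSSet.obj X) (n : ℕ)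
    (ε : Fin (n + 1) → Bool) :
    SimplexCategory.toTop.obj (SimplexCategory.mk n) ⟶ X :=
  (ι.app (Opposite.op (SimplexCategory.mk n)) ε).down

/-!
A map into `K∞` is the same as a `Bool`-valued labelling of vertices: every vertex sequence is the
vertex sequence of exactly one simplex of `K∞`. Hence a map `K∞ ⟶ S` that separates the two
vertices has a retraction, obtained by labelling the vertices of `S` with a left inverse. Two
distinct points of a convex set give such a map, sending each vertex sequence to the affine singular
simplex that it spans.
-/

open Opposite

namespace KInf

section Coskeletal

variable {S : SSet.{0}}

/-- The map to `K∞` induced by a labelling of the vertices: a simplex is sent to the sequence of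
labels of its vertices. -/
def lift (p : S _⦋0⦌ → Bool) : S ⟶ KInf where
  app m := ↾fun x i ↦ p (S.map (SimplexCategory.const ⦋0⦌ m.unop i).op x)
  naturality m k f := by
    ext x
    funext i
    exact congrArg p (S.map_comp_apply f (SimplexCategory.const ⦋0⦌ k.unop i).op x).symm

theorem lift_app_zero (p : S _⦋0⦌ → Bool) (x : S _⦋0⦌) :
    (lift p).app (op ⦋0⦌) x 0 = p x := by
  change p (S.map (SimplexCategory.const ⦋0⦌ ⦋0⦌ 0).op x) = p x
  simp only [SimplexCategory.const_eq_id, op_id, Functor.map_id_apply]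

theorem hom_app_apply (f : S ⟶ KInf) (m : SimplexCategoryᵒᵖ) (x : S.obj m)
    (i : Fin (m.unop.len + 1)) :
    f.app m x i = f.app (op ⦋0⦌) (S.map (SimplexCategory.const ⦋0⦌ m.unop i).op x) 0 := by
  rw [NatTrans.naturality_apply]
  rfl

theorem hom_ext {f g : S ⟶ KInf}
    (h : ∀ x : S _⦋0⦌, f.app (op ⦋0⦌) x 0 = g.app (op ⦋0⦌) x 0) : f = g := by
  ext m x
  funext i
  exact (hom_app_apply f m x i).trans ((h _).trans (hom_app_apply g m x i).symm)

theorem exists_retraction_of_app_zero_injective (ι : KInf ⟶ S)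
    (hι : Function.Injective (ι.app (op ⦋0⦌))) :
    ∃ r : S ⟶ KInf, ι ≫ r = 𝟙 KInf := by
  have : Nonempty (KInf _⦋0⦌) := ⟨fun _ ↦ false⟩
  let label (x : S _⦋0⦌) : Bool := Function.invFun (ι.app (op ⦋0⦌)) x 0
  refine ⟨lift label, hom_ext fun ε ↦ ?_⟩
  calc (ι ≫ lift label).app (op ⦋0⦌) ε 0
    _ = label (ι.app (op ⦋0⦌) ε) := lift_app_zero label _
    _ = ε 0 := congrFun (Function.leftInverse_invFun hι ε) 0

end Coskeletal

end KInf

theorem linearCombination_funOnFinite_linearMap {R M α β : Type*} [Semiring R] [AddCommMonoid M]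
    [Module R M] [Fintype α] [Fintype β] (f : α → β) (v : β → M) (w : α → R) :
    Fintype.linearCombination R v (FunOnFinite.linearMap R R f w) =
      Fintype.linearCombination R (v ∘ f) w := by
  classical
  suffices Fintype.linearCombination R v ∘ₗ FunOnFinite.linearMap R R f =
      Fintype.linearCombination R (v ∘ f) from LinearMap.congr_fun this w
  ext i
  simp

section AffineSimplex

variable {E : Type*} [AddCommGroup E] [Module ℝ E] [TopologicalSpace E] [ContinuousAdd E]
  [ContinuousSMul ℝ E] {s : Set E} {α β : Type*} [Fintype α] [Fintype β]

/-- The affine singular simplex with vertices `v` in a convex set. The vertices are indexed by an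
arbitrary finite type, so that reindexing covers all simplicial operators. -/
def affineSimplex (hs : Convex ℝ s) (v : α → s) : C(stdSimplex ℝ α, s) where
  toFun w := ⟨Fintype.linearCombination ℝ (fun i ↦ (v i : E)) w,
    hs.sum_mem (fun i _ ↦ w.2.1 i) w.2.2 fun i _ ↦ (v i).2⟩
  continuous_toFun := by
    refine Continuous.subtype_mk (continuous_finsetSum _ fun i _ ↦ ?_) _
    exact ((continuous_apply i).comp continuous_subtype_val).smul continuous_const

theorem affineSimplex_apply (hs : Convex ℝ s) (v : α → s) (w : stdSimplex ℝ α) :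
    (affineSimplex hs v w : E) = ∑ i, w i • (v i : E) :=
  rfl

theorem affineSimplex_map (hs : Convex ℝ s) (f : α → β) (v : β → s) (w : stdSimplex ℝ α) :
    affineSimplex hs v (stdSimplex.map f w) = affineSimplex hs (v ∘ f) w :=
  Subtype.ext (linearCombination_funOnFinite_linearMap f (fun i ↦ (v i : E)) w)

theorem affineSimplex_of_unique [Unique α] (hs : Convex ℝ s) (v : α → s) (w : stdSimplex ℝ α) :
    affineSimplex hs v w = v default := by
  apply Subtype.ext
  rw [affineSimplex_apply, Fintype.sum_unique, stdSimplex.eq_one_of_unique, one_smul]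

end AffineSimplex

namespace KInf

variable {E : Type} [AddCommGroup E] [Module ℝ E] [TopologicalSpace E] [ContinuousAdd E]
  [ContinuousSMul ℝ E] {s : Set E}

/-- The map from `K∞` to the singular simplicial set of a convex set that is determined by the
images `v` of the two vertices and is affine on every simplex. -/
noncomputable def toConvex (hs : Convex ℝ s) (v : Bool → s) :
    KInf ⟶ TopCat.toSSet.obj (TopCat.of s) where
  app m := ↾fun ε ↦ (TopCat.toSSetObjEquiv (TopCat.of s) m).symm (affineSimplex hs (v ∘ ε))
  naturality m k f := by
    ext ε
    apply (TopCat.toSSetObjEquiv (TopCat.of s) k).injective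
    ext w : 1
    exact (affineSimplex_map hs f.unop.toOrderHom (v ∘ ε) w).symm

theorem appAsMap_toConvex (hs : Convex ℝ s) (v : Bool → s) (n : ℕ) (ε : Fin (n + 1) → Bool)
    (w : SimplexCategory.toTop.{0}.obj ⦋n⦌) :
    appAsMap (toConvex hs v) n ε w = affineSimplex hs (v ∘ ε) w.down :=
  rfl

theorem toConvex_app_zero_injective (hs : Convex ℝ s) {v : Bool → s}
    (hv : Function.Injective v) : Function.Injective ((toConvex hs v).app (op ⦋0⦌)) := by
  intro (ε : Fin 1 → Bool) (ε' : Fin 1 → Bool) h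
  have vertex_eq : v (ε 0) = v (ε' 0) := by
    calc v (ε 0)
      _ = affineSimplex hs (v ∘ ε) default := (affineSimplex_of_unique hs (v ∘ ε) default).symm
      _ = affineSimplex hs (v ∘ ε') default :=
        DFunLike.congr_fun ((TopCat.toSSetObjEquiv _ _).symm.injective h) default
      _ = v (ε' 0) := affineSimplex_of_unique hs (v ∘ ε') default
  funext i
  rw [Subsingleton.elim i 0]
  exact hv vertex_eq

end KInf

theorem kinf_is_retract_of_singular_interval_general {E : Type} [AddCommGroup E] [Module ℝ E]
    [TopologicalSpace E] [ContinuousAdd E] [ContinuousSMul ℝ E] {s : Set E} (hs : Convex ℝ s)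
    {v : Bool → s} (hv : Function.Injective v) :
    ∃ (ι : KInf ⟶ TopCat.toSSet.obj (TopCat.of s)) (r : TopCat.toSSet.obj (TopCat.of s) ⟶ KInf),
      (∀ (n : ℕ) (ε : Fin (n + 1) → Bool) (w : SimplexCategory.toTop.{0}.obj ⦋n⦌),
        (appAsMap ι n ε w).1 = ∑ i, w.down.1 i • (v (ε i)).1) ∧
      ι ≫ r = 𝟙 KInf := by
  obtain ⟨r, hr⟩ := KInf.exists_retraction_of_app_zero_injective _
    (KInf.toConvex_app_zero_injective hs hv)
  refine ⟨KInf.toConvex hs v, r, fun n ε w ↦ ?_, hr⟩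
  rw [KInf.appAsMap_toConvex]
  exact affineSimplex_apply hs (v ∘ ε) w.down

/-- **Theorem.** The simplicial set `K∞` (the nerve of the groupoid with two objects and
two mutually inverse morphisms) is a retract of `I`, the singular simplicial set of the
interval `[0,1]`: the inclusion `K∞ ↪ I` (sending a vertex sequence `ε` to the affine
singular simplex with vertex values `ε`) admits a simplicial retraction. -/
theorem kinf_is_retract_of_singular_interval :
    ∃ (ι : KInf ⟶ TopCat.toSSet.obj (TopCat.of unitInterval))
      (r : TopCat.toSSet.obj (TopCat.of unitInterval) ⟶ KInf),
      (∀ (n : ℕ) (ε : Fin (n + 1) → Bool)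
        (w : SimplexCategory.toTop.{0}.obj (SimplexCategory.mk n)),
        (appAsMap ι n ε w).1 =
          ∑ i : Fin (n + 1), if ε i then (w.down.1 i : ℝ) else 0) ∧
      ι ≫ r = 𝟙 KInf := by
  have endpoints_injective :
      Function.Injective fun b : Bool ↦ if b then (1 : unitInterval) else 0 := by
    simp [Bool.injective_iff]
  obtain ⟨ι, r, hι, hr⟩ :=
    kinf_is_retract_of_singular_interval_general (convex_Icc (0 : ℝ) 1) endpoints_injective
  refine ⟨ι, r, fun n ε w ↦ (hι n ε w).trans (Finset.sum_congr rfl fun i _ ↦ ?_), hr⟩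
  cases ε i <;> simp
end

section
/- Let A be a dg algebra. Any cohesive A-module is a retract (in the dg category of dg A-modules) of a free cohesive A-module, i.e. one of the form F′ ⊗_{A⁰} A with F′ a bounded graded A⁰-module, free of finite rank in every degree. -/
open DirectSum

/-! ## dg modules over a dg algebra, cohesive modules -/

/-- A (right) dg module over a dg algebra `A`: a graded `k`-module with a right
`A`-action and a square-zero degree-one differential satisfying the graded Leibniz
rule. -/
structure DGMod (k : Type) [CommRing k] (A : DGA k) : Type 1 where
  M : Type
  [addM : AddCommGroup M]
  [modM : Module k M]
  grM : ℤ → Submodule k M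
  act : M → A.A → M
  act_addl : ∀ m m' a, act (m + m') a = act m a + act m' a
  act_addr : ∀ m a a', act m (a + a') = act m a + act m a'
  act_smul : ∀ (c : k) m a, act (c • m) a = c • act m a
  act_smul' : ∀ (c : k) m a, act m (c • a) = c • act m a
  act_one : ∀ m, act m 1 = m
  act_mul : ∀ m a b, act (act m a) b = act m (a * b)
  act_gr : ∀ (i j : ℤ), ∀ m ∈ grM i, ∀ a ∈ A.gr j, act m a ∈ grM (i + j)
  dM : M → M
  dM_add : ∀ m m', dM (m + m') = dM m + dM m'
  dM_smul : ∀ (c : k) m, dM (c • m) = c • dM m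
  dM_sq : ∀ m, dM (dM m) = 0
  dM_gr : ∀ (i : ℤ), ∀ m ∈ grM i, dM m ∈ grM (i + 1)
  leibnizM : ∀ (i : ℤ), ∀ m ∈ grM i, ∀ a,
    dM (act m a) = act (dM m) a + (((-1 : ℤˣ) ^ i : ℤˣ) : ℤ) • act m (A.d a)

attribute [instance] DGMod.addM DGMod.modM

namespace DGMod

variable {k : Type} [CommRing k] {A : DGA k}

/-- A morphism of dg `A`-modules (closed, of degree zero). -/
def IsHom (M N : DGMod k A) (f : M.M → N.M) : Prop :=
  (∀ m m', f (m + m') = f m + f m') ∧ (∀ (c : k) m, f (c • m) = c • f m) ∧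
  (∀ m a, f (M.act m a) = N.act (f m) a) ∧
  (∀ (i : ℤ), ∀ m ∈ M.grM i, f m ∈ N.grM i) ∧
  (∀ m, f (M.dM m) = N.dM (f m))

/-- An `A`-linear graded map of degree `r` (not necessarily closed). -/
def IsGradedMap (M N : DGMod k A) (r : ℤ) (h : M.M → N.M) : Prop :=
  (∀ m m', h (m + m') = h m + h m') ∧ (∀ (c : k) m, h (c • m) = c • h m) ∧
  (∀ m a, h (M.act m a) = N.act (h m) a) ∧
  (∀ (i : ℤ), ∀ m ∈ M.grM i, h m ∈ N.grM (i + r))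

/-- Two maps of dg `A`-modules are (chain) homotopic. -/
def Homotopic (M N : DGMod k A) (f g : M.M → N.M) : Prop :=
  ∃ h : M.M → N.M, IsGradedMap M N (-1) h ∧ ∀ m, f m - g m = N.dM (h m) + h (M.dM m)

/-- A dg `A`-module is free cohesive if its underlying graded module is free on finitely
many homogeneous generators (i.e. of the form `F' ⊗_{A⁰} A` with `F'` a bounded graded
`A⁰`-module, free of finite rank in every degree). -/
def IsFreeCohesive (M : DGMod k A) : Prop :=
  ∃ (n : ℕ) (dv : Fin n → ℤ) (bas : Fin n → M.M),
    (∀ i, bas i ∈ M.grM (dv i)) ∧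
    (∀ m : M.M, ∃! c : Fin n → A.A, m = ∑ i, M.act (bas i) (c i))

/-- A dg `A`-module `M` is cohesive: its underlying graded module `M^#` is isomorphic to
`E ⊗_{A⁰} A^#` for a graded right `A⁰`-module `E` which is finitely generated projective
in every degree and bounded.  Equivalently (as encoded here), `M^#` is the image of a
degree-preserving idempotent matrix `e` with entries in `A⁰` acting on a finitely
generated free graded `A^#`-module, via a splitting `(p, ι)` of graded `A^#`-module
maps. -/
def IsCohesive (M : DGMod k A) : Prop :=
  ∃ (n : ℕ) (dv : Fin n → ℤ) (e : Fin n → Fin n → A.A)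
    (p : M.M → (Fin n → A.A)) (ι : (Fin n → A.A) → M.M),
    (∀ i j, e i j ∈ A.gr 0) ∧ (∀ i j, dv i ≠ dv j → e i j = 0) ∧
    (∀ i j, ∑ l, e i l * e l j = e i j) ∧
    (∀ m m' i, p (m + m') i = p m i + p m' i) ∧
    (∀ m a i, p (M.act m a) i = p m i * a) ∧
    (∀ (g : ℤ), ∀ m ∈ M.grM g, ∀ i, p m i ∈ A.gr (g - dv i)) ∧
    (∀ v v', ι (v + v') = ι v + ι v') ∧
    (∀ v a, ι (fun i => v i * a) = M.act (ι v) a) ∧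
    (∀ (g : ℤ) (v : Fin n → A.A), (∀ i, v i ∈ A.gr (g - dv i)) → ι v ∈ M.grM g) ∧
    (∀ m, ι (p m) = m) ∧
    (∀ v i, p (ι v) i = ∑ l, e i l * v l)

end DGMod

/-! A dg structure on a graded module is a flat connection. If the graded module underlying `M` is a
direct summand of a graded module `F` carrying some connection `∇`, with inclusion `i`, projection
`p` and complementary projector `q = 1 - i p`, then `T = i d p + q ∇ q` is a connection on `F`
compatible with `i` and `p`. Its curvature `T²` need not vanish, but it is concentrated on the
complement: `q T² = T²`. Hence the matrix `[[T, q], [-T², -T]]` is a flat connection on `F ⊕ F[1]`,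
and `M` is a retract of the resulting dg module through the first summand. A free graded module
always carries a connection, namely the differential of `A` on each coordinate, up to sign. -/

namespace DGMod

open MulOpposite
open scoped RightActions

variable {k : Type} [CommRing k] {A : DGA k}

instance (M : DGMod k A) : Module (A.A)ᵐᵒᵖ M.M where
  smul a m := M.act m a.unop
  one_smul := M.act_one
  mul_smul a b m := (M.act_mul m b.unop a.unop).symm
  smul_zero a := by
    change M.act 0 a.unop = 0
    simpa using M.act_smul 0 0 a.unop
  smul_add a m m' := M.act_addl m m' a.unop
  add_smul a b m := M.act_addr m a.unop b.unop
  zero_smul m := by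
    change M.act m 0 = 0
    simpa using M.act_smul' 0 m 0

instance (M : DGMod k A) : IsScalarTower k (A.A)ᵐᵒᵖ M.M where
  smul_assoc c a m := M.act_smul' c m a.unop

/-- The differential of a dg module as a `k`-linear map. -/
def differential (M : DGMod k A) : M.M →ₗ[k] M.M where
  toFun := M.dM
  map_add' := M.dM_add
  map_smul' := M.dM_smul

lemma differential_differential (M : DGMod k A) (m : M.M) :
    M.differential (M.differential m) = 0 :=
  M.dM_sq m

section Connection

variable {F : Type*} [AddCommGroup F] [Module k F] [Module (A.A)ᵐᵒᵖ F]

variable (A) in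
/-- The subspaces `gr i` make `F` a graded right module over the graded algebra `A^#`. As in
`DGMod`, they are not required to be a direct sum decomposition of `F`. -/
def IsGradedAction (gr : ℤ → Submodule k F) : Prop :=
  ∀ ⦃i j : ℤ⦄ ⦃v : F⦄ ⦃a : A.A⦄, v ∈ gr i → a ∈ A.gr j → v <• a ∈ gr (i + j)

variable (A) in
/-- A connection on a graded right `A`-module: a map of degree one obeying the Leibniz rule over
the differential of `A`, but not required to square to zero. -/
structure IsConnection (gr : ℤ → Submodule k F) (T : F →ₗ[k] F) : Prop where
  map_mem : ∀ ⦃g : ℤ⦄ ⦃v : F⦄, v ∈ gr g → T v ∈ gr (g + 1)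
  leibniz : ∀ ⦃g : ℤ⦄ ⦃v : F⦄, v ∈ gr g → ∀ a : A.A,
    T (v <• a) = T v <• a + (g.negOnePow : ℤ) • (v <• A.d a)

lemma isConnection_differential (M : DGMod k A) : IsConnection A M.grM M.differential where
  map_mem := M.dM_gr
  leibniz := M.leibnizM

/-- The dg module given by a graded right `A`-module with a flat connection. -/
abbrev ofFlatConnection {F : Type} [AddCommGroup F] [Module k F] [Module (A.A)ᵐᵒᵖ F]
    [IsScalarTower k (A.A)ᵐᵒᵖ F] {gr : ℤ → Submodule k F} {D : F →ₗ[k] F}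
    (hgr : IsGradedAction A gr) (hD : IsConnection A gr D) (hflat : ∀ v, D (D v) = 0) :
    DGMod k A where
  M := F
  grM := gr
  act v a := v <• a
  act_addl v w a := smul_add (op a) v w
  act_addr v a b := add_smul (op a) (op b) v
  act_smul c v a := smul_comm (op a) c v
  act_smul' c v a := smul_assoc c (op a) v
  act_one := one_smul (A.A)ᵐᵒᵖ
  act_mul v a b := (mul_smul (op b) (op a) v).symm
  act_gr _ _ _ hv _ ha := hgr hv ha
  dM := D
  dM_add := map_add D
  dM_smul := map_smul D
  dM_sq := hflat
  dM_gr _ _ hv := hD.map_mem hv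
  leibnizM _ _ hv := hD.leibniz hv

variable {gr : ℤ → Submodule k F} {T : F →ₗ[k] F}

lemma IsConnection.curvature_op_smul (hT : IsConnection A gr T) {g : ℤ} {v : F} (hv : v ∈ gr g)
    (a : A.A) : T (T (v <• a)) = T (T v) <• a := by
  rw [hT.leibniz hv, map_add, map_zsmul, hT.leibniz (hT.map_mem hv), hT.leibniz hv, A.d_sq,
    Int.negOnePow_succ, Units.val_neg]
  simp only [neg_smul, op_zero, zero_smul, smul_zero, add_zero, neg_add_cancel_right]

end Connection

section CurvatureDouble

variable {F : Type*} [AddCommGroup F] [Module k F] [Module (A.A)ᵐᵒᵖ F]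
  {gr : ℤ → Submodule k F} {T : F →ₗ[k] F}

/-- The grading of `F ⊕ F[1]`. -/
def doubleGrading (gr : ℤ → Submodule k F) (g : ℤ) : Submodule k (F × F) :=
  (gr g).prod (gr (g + 1))

lemma IsGradedAction.double (hgr : IsGradedAction A gr) :
    IsGradedAction A (doubleGrading gr) := fun i j _ _ hv ha =>
  ⟨hgr hv.1 ha, add_right_comm i j 1 ▸ hgr hv.2 ha⟩

/-- The map `[[T, q], [-T², -T]]` on `F ⊕ F[1]`. -/
def doubleConnection (T q : F →ₗ[k] F) : F × F →ₗ[k] F × F :=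
  (T.coprod q).prod (-(T ∘ₗ T).coprod T)

@[simp]
lemma doubleConnection_apply (T q : F →ₗ[k] F) (x : F × F) :
    doubleConnection T q x = (T x.1 + q x.2, -(T (T x.1) + T x.2)) :=
  rfl

lemma doubleConnection_flat {q : F →ₗ[k] F} (hTq : ∀ v, T (q v) = q (T v))
    (hqT : ∀ v, q (T (T v)) = T (T v)) (x : F × F) :
    doubleConnection T q (doubleConnection T q x) = 0 := by
  ext
  · simp [hTq, hqT]
  · simp [hTq, hqT]

lemma IsConnection.double [IsScalarTower k (A.A)ᵐᵒᵖ F] (hT : IsConnection A gr T)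
    {q : F →ₗ[(A.A)ᵐᵒᵖ] F} (hq : ∀ ⦃g v⦄, v ∈ gr g → q v ∈ gr g) :
    IsConnection A (doubleGrading gr) (doubleConnection T (q.restrictScalars k)) where
  map_mem _ _ hx :=
    ⟨add_mem (hT.map_mem hx.1) (hq hx.2),
      neg_mem (add_mem (hT.map_mem (hT.map_mem hx.1)) (hT.map_mem hx.2))⟩
  leibniz g x hx a := by
    ext
    · simp only [doubleConnection_apply, Prod.smul_fst, Prod.smul_snd, Prod.fst_add,
        LinearMap.coe_restrictScalars, map_smul, hT.leibniz hx.1, smul_add]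
      abel
    · simp only [doubleConnection_apply, Prod.smul_fst, Prod.smul_snd, Prod.snd_add,
        hT.curvature_op_smul hx.1, hT.leibniz hx.2, Int.negOnePow_succ, Units.val_neg, neg_smul,
        smul_neg, smul_add]
      abel

end CurvatureDouble

section GradedRetract

variable {F : Type*} [AddCommGroup F] [Module k F] [Module (A.A)ᵐᵒᵖ F]

/-- A presentation of the graded module `M^#` underlying a dg module as a direct summand of the
graded right `A`-module `F`, ignoring differentials. -/
structure GradedRetract (M : DGMod k A) (gr : ℤ → Submodule k F) where
  incl : M.M →ₗ[(A.A)ᵐᵒᵖ] F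
  proj : F →ₗ[(A.A)ᵐᵒᵖ] M.M
  incl_mem : ∀ ⦃g : ℤ⦄ ⦃m : M.M⦄, m ∈ M.grM g → incl m ∈ gr g
  proj_mem : ∀ ⦃g : ℤ⦄ ⦃v : F⦄, v ∈ gr g → proj v ∈ M.grM g
  proj_incl : ∀ m, proj (incl m) = m

namespace GradedRetract

variable {M : DGMod k A} {gr : ℤ → Submodule k F} (r : M.GradedRetract gr)

/-- The projector of `F` onto the complement of `M^#`. -/
def compl : F →ₗ[(A.A)ᵐᵒᵖ] F :=
  LinearMap.id - r.incl ∘ₗ r.proj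

lemma compl_apply (v : F) : r.compl v = v - r.incl (r.proj v) :=
  rfl

lemma compl_mem ⦃g : ℤ⦄ ⦃v : F⦄ (hv : v ∈ gr g) : r.compl v ∈ gr g :=
  sub_mem hv (r.incl_mem (r.proj_mem hv))

lemma compl_incl (m : M.M) : r.compl (r.incl m) = 0 := by
  rw [compl_apply, r.proj_incl, sub_self]

lemma proj_compl (v : F) : r.proj (r.compl v) = 0 := by
  rw [compl_apply, map_sub, r.proj_incl, sub_self]

lemma compl_compl (v : F) : r.compl (r.compl v) = r.compl v := by
  rw [compl_apply, r.proj_compl, map_zero, sub_zero]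

variable [IsScalarTower k (A.A)ᵐᵒᵖ F]

/-- The connection `i d p + q ∇ q` on `F`, which restricts to the differential on the summand `M^#`
and to the compression of `∇` on its complement. -/
def connection (nabla : F →ₗ[k] F) : F →ₗ[k] F :=
  r.incl.restrictScalars k ∘ₗ M.differential ∘ₗ r.proj.restrictScalars k +
    r.compl.restrictScalars k ∘ₗ nabla ∘ₗ r.compl.restrictScalars k

variable {nabla : F →ₗ[k] F}

lemma connection_apply (v : F) : r.connection nabla v =
    r.incl (M.differential (r.proj v)) + r.compl (nabla (r.compl v)) :=
  rfl

lemma connection_incl (m : M.M) :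
    r.connection nabla (r.incl m) = r.incl (M.differential m) := by
  rw [connection_apply, r.proj_incl, r.compl_incl, map_zero, map_zero, add_zero]

lemma proj_connection (v : F) :
    r.proj (r.connection nabla v) = M.differential (r.proj v) := by
  rw [connection_apply, map_add, r.proj_incl, r.proj_compl, add_zero]

lemma connection_compl (v : F) :
    r.connection nabla (r.compl v) = r.compl (r.connection nabla v) := by
  rw [compl_apply, compl_apply, map_sub, r.connection_incl, r.proj_connection]

lemma compl_curvature (v : F) :
    r.compl (r.connection nabla (r.connection nabla v)) =
      r.connection nabla (r.connection nabla v) := by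
  rw [compl_apply, r.proj_connection, r.proj_connection, M.differential_differential, map_zero,
    sub_zero]

lemma isConnection_connection (hnabla : IsConnection A gr nabla) :
    IsConnection A gr (r.connection nabla) where
  map_mem _ _ hv :=
    add_mem (r.incl_mem (M.isConnection_differential.map_mem (r.proj_mem hv)))
      (r.compl_mem (hnabla.map_mem (r.compl_mem hv)))
  leibniz g v hv a := by
    have hsplit : v <• A.d a = r.incl (r.proj v) <• A.d a + r.compl v <• A.d a := by
      rw [compl_apply, ← smul_add, add_sub_cancel]
    rw [hsplit, connection_apply, connection_apply, map_smul r.proj, map_smul r.compl,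
      M.isConnection_differential.leibniz (r.proj_mem hv), hnabla.leibniz (r.compl_mem hv)]
    simp only [map_add, map_smul, map_zsmul, r.compl_compl, smul_add]
    abel

end GradedRetract

end GradedRetract

section RetractOfDouble

namespace GradedRetract

variable {F : Type} [AddCommGroup F] [Module k F] [Module (A.A)ᵐᵒᵖ F]
  [IsScalarTower k (A.A)ᵐᵒᵖ F] {M : DGMod k A} {gr : ℤ → Submodule k F} {nabla : F →ₗ[k] F}
  (r : M.GradedRetract gr)

/-- The dg module structure on `F ⊕ F[1]` of which `M` is a retract. -/
abbrev double (hgr : IsGradedAction A gr) (hnabla : IsConnection A gr nabla) : DGMod k A :=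
  ofFlatConnection hgr.double ((r.isConnection_connection hnabla).double r.compl_mem)
    (doubleConnection_flat r.connection_compl r.compl_curvature)

variable (hgr : IsGradedAction A gr) (hnabla : IsConnection A gr nabla)

lemma isHom_inl_incl : IsHom M (r.double hgr hnabla) fun m => (r.incl m, 0) := by
  refine ⟨fun m m' => ?_, fun c m => ?_, fun m a => ?_, fun g m hm => ?_, fun m => ?_⟩
  · exact Prod.ext (map_add r.incl m m') (add_zero 0).symm
  · exact Prod.ext (LinearMap.map_smul_of_tower r.incl c m) (smul_zero c).symm
  · exact Prod.ext (map_smul r.incl (op a) m) (smul_zero (op a)).symm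
  · exact ⟨r.incl_mem hm, zero_mem _⟩
  · change (r.incl (M.differential m), (0 : F)) = doubleConnection _ _ (r.incl m, 0)
    simp [r.connection_incl, M.differential_differential]

lemma isHom_proj_fst : IsHom (r.double hgr hnabla) M fun x => r.proj x.1 := by
  refine ⟨fun x y => ?_, fun c x => ?_, fun x a => ?_, fun g x hx => ?_, fun x => ?_⟩
  · exact map_add r.proj x.1 y.1
  · exact LinearMap.map_smul_of_tower r.proj c x.1
  · exact map_smul r.proj (op a) x.1
  · exact r.proj_mem hx.1
  · change r.proj (r.connection nabla x.1 + r.compl x.2) = M.differential (r.proj x.1)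
    rw [map_add, r.proj_connection, r.proj_compl, add_zero]

end GradedRetract

end RetractOfDouble

section Free

variable {ι : Type*}

/-- The grading of the free graded right module `A^ι` whose `i`-th generator has degree `dv i`. -/
def freeGrading (A : DGA k) (dv : ι → ℤ) (g : ℤ) : Submodule k (ι → A.A) :=
  Submodule.pi Set.univ fun i => A.gr (g - dv i)

lemma mem_freeGrading {dv : ι → ℤ} {g : ℤ} {v : ι → A.A} :
    v ∈ freeGrading A dv g ↔ ∀ i, v i ∈ A.gr (g - dv i) := by
  simp [freeGrading]

lemma isGradedAction_freeGrading (dv : ι → ℤ) : IsGradedAction A (freeGrading A dv) := by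
  intro g j v a hv ha
  rw [mem_freeGrading] at hv ⊢
  intro i
  rw [← sub_add_eq_add_sub]
  exact SetLike.mul_mem_graded (hv i) ha

/-- The differential of `A` on each coordinate of `A^ι`, with the Koszul sign for moving past a
generator of degree `dv i`. -/
def freeConnection (A : DGA k) (dv : ι → ℤ) : (ι → A.A) →ₗ[k] (ι → A.A) :=
  LinearMap.pi fun i => ((dv i).negOnePow : ℤ) • A.d ∘ₗ LinearMap.proj i

lemma isConnection_freeConnection (dv : ι → ℤ) :
    IsConnection A (freeGrading A dv) (freeConnection A dv) where
  map_mem g v hv := by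
    rw [mem_freeGrading] at hv ⊢
    intro i
    rw [← sub_add_eq_add_sub]
    exact zsmul_mem (A.d_mem _ _ (hv i)) _
  leibniz g v hv a := by
    ext i
    have hsign : ((dv i).negOnePow : ℤ) * ((g - dv i).negOnePow : ℤ) = g.negOnePow := by
      rw [← Units.val_mul, ← Int.negOnePow_add, add_sub_cancel]
    have hleib : A.d (v i * a) = A.d (v i) * a + ((g - dv i).negOnePow : ℤ) • (v i * A.d a) :=
      A.leibniz _ _ (mem_freeGrading.mp hv i) a
    change ((dv i).negOnePow : ℤ) • A.d (v i * a) =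
      (((dv i).negOnePow : ℤ) • A.d (v i)) * a + (g.negOnePow : ℤ) • (v i * A.d a)
    rw [hleib, smul_add, smul_smul, hsign, smul_mul_assoc]

lemma isFreeCohesive_of_basis [Finite ι] {N : DGMod k A} (b : Module.Basis ι (A.A)ᵐᵒᵖ N.M)
    {dv : ι → ℤ} (hb : ∀ i, b i ∈ N.grM (dv i)) : IsFreeCohesive N := by
  let b' := b.reindex (Finite.equivFin ι)
  refine ⟨Nat.card ι, dv ∘ (Finite.equivFin ι).symm, b', fun i => ?_, fun m => ?_⟩
  · rw [b.reindex_apply]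
    exact hb _
  · refine ⟨fun i => unop (b'.equivFun m i), (b'.sum_equivFun m).symm, fun c hc => ?_⟩
    have hm : m = b'.equivFun.symm fun i => op (c i) := by
      rw [b'.equivFun_symm_apply]
      exact hc
    rw [hm, LinearEquiv.apply_symm_apply]
    rfl

/-- The standard basis of `R^ι` as a right `R`-module. -/
noncomputable def rightBasisFun (R : Type*) [Semiring R] (ι : Type*) [Finite ι] :
    Module.Basis ι Rᵐᵒᵖ (ι → R) :=
  .ofEquivFun (.piCongrRight fun _ => opLinearEquiv Rᵐᵒᵖ)

lemma rightBasisFun_apply (R : Type*) [Semiring R] {ι : Type*} [Finite ι] [DecidableEq ι] (i : ι) :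
    rightBasisFun R ι i = Pi.single i 1 := by
  rw [rightBasisFun, Module.Basis.coe_ofEquivFun]
  ext j
  simp [Pi.single_apply, apply_ite unop]

lemma rightBasisFun_mem_freeGrading [Finite ι] (dv : ι → ℤ) (i : ι) :
    rightBasisFun A.A ι i ∈ freeGrading A dv (dv i) := by
  classical
  rw [rightBasisFun_apply, mem_freeGrading]
  intro j
  obtain rfl | hij := eq_or_ne j i
  · rw [Pi.single_eq_same, sub_self]
    exact SetLike.one_mem_graded A.gr
  · rw [Pi.single_eq_of_ne hij]
    exact zero_mem _

lemma GradedRetract.isFreeCohesive_double {ι : Type} [Finite ι] {M : DGMod k A} {dv : ι → ℤ}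
    (r : M.GradedRetract (freeGrading A dv)) :
    IsFreeCohesive
      (r.double (isGradedAction_freeGrading dv) (isConnection_freeConnection dv)) := by
  refine isFreeCohesive_of_basis ((rightBasisFun A.A ι).prod (rightBasisFun A.A ι))
    (dv := Sum.elim dv fun i => dv i - 1) ?_
  rintro (i | i)
  · rw [Module.Basis.prod_apply]
    exact ⟨rightBasisFun_mem_freeGrading dv i, zero_mem _⟩
  · rw [Module.Basis.prod_apply]
    exact ⟨zero_mem _, (sub_add_cancel (dv i) 1).symm ▸ rightBasisFun_mem_freeGrading dv i⟩

/-- The graded module underlying `M` is finitely generated projective over `A^#`: a direct summand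
of a free graded module on finitely many homogeneous generators. Unlike for a cohesive module, the
projector need not be defined over `A⁰`. -/
def IsFinitelyGeneratedProjective (M : DGMod k A) : Prop :=
  ∃ (n : ℕ) (dv : Fin n → ℤ), Nonempty (M.GradedRetract (freeGrading A dv))

lemma IsCohesive.isFinitelyGeneratedProjective {M : DGMod k A} (hM : IsCohesive M) :
    IsFinitelyGeneratedProjective M := by
  obtain ⟨n, dv, -, p, ι, -, -, -, hp_add, hp_act, hp_mem, hι_add, hι_act, hι_mem, hιp, -⟩ := hM
  exact ⟨n, dv, ⟨{
    incl := ⟨⟨p, fun m m' => funext (hp_add m m')⟩, fun a m => funext (hp_act m a.unop)⟩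
    proj := ⟨⟨ι, hι_add⟩, fun a v => hι_act v a.unop⟩
    incl_mem := fun g m hm => mem_freeGrading.mpr (hp_mem g m hm)
    proj_mem := fun g v hv => hι_mem g v (mem_freeGrading.mp hv)
    proj_incl := hιp }⟩⟩

end Free

end DGMod

theorem cohesive_module_is_retract_of_free_cohesive_general
    {k : Type} [CommRing k] (A : DGA k) (M : DGMod k A)
    (hM : DGMod.IsFinitelyGeneratedProjective M) :
    ∃ N : DGMod k A, DGMod.IsFreeCohesive N ∧
      ∃ (f : M.M → N.M) (g : N.M → M.M),
        DGMod.IsHom M N f ∧ DGMod.IsHom N M g ∧ ∀ m, g (f m) = m := by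
  obtain ⟨n, dv, ⟨r⟩⟩ := hM
  exact ⟨_, r.isFreeCohesive_double, _, _, r.isHom_inl_incl _ _, r.isHom_proj_fst _ _, r.proj_incl⟩

/-- **Theorem.** Let `A` be a dg algebra.  Any cohesive `A`-module is a retract (in the
dg category of dg `A`-modules) of a free cohesive `A`-module, i.e. one of the form
`F' ⊗_{A⁰} A` with `F'` a bounded graded `A⁰`-module, free of finite rank in every
degree. -/
theorem cohesive_module_is_retract_of_free_cohesive
    {k : Type} [CommRing k] (A : DGA k) (M : DGMod k A) (hM : DGMod.IsCohesive M) :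
    ∃ N : DGMod k A, DGMod.IsFreeCohesive N ∧
      ∃ (f : M.M → N.M) (g : N.M → M.M),
        DGMod.IsHom M N f ∧ DGMod.IsHom N M g ∧ ∀ m, g (f m) = m :=
  cohesive_module_is_retract_of_free_cohesive_general A M hM.isFinitelyGeneratedProjective
end
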